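/- arXiv:2108.08675 — 2 statements merged into one kernel-verified Lean document; each statement's English description precedes it below -/
import Mathlib

section
/- Let u be the uniform probability measure on the d-dimensional torus T^d. Then for every positive smooth function f on T^d: Ent_u(f) ≤ (1/(8π²)) ∫_{T^d} (|∇f|²/f) du. -/
open MeasureTheory Real Set

noncomputable section

open Filter Topology

/-- Wirtinger's inequality on the circle. -/
lemma wirtinger_aux (q q' : ℝ → ℝ) (hq : ∀ x, HasDerivAt q (q' x) x) (hq' : Continuous q')
    (hper : q 1 = q 0) (hmean : ∫ x in (0:ℝ)..1, q x = 0) :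
    4 * π ^ 2 * ∫ x in (0:ℝ)..1, q x ^ 2 ≤ ∫ x in (0:ℝ)..1, q' x ^ 2 := by
  have hqc : Continuous q := continuous_iff_continuousAt.2 fun x => (hq x).continuousAt
  have hL : ∀ g : ℝ → ℝ, Continuous g →
      MemLp (fun x => (g x : ℂ)) 2 (volume.restrict (Ioc (0:ℝ) 1)) := by
    intro g hg
    have h1 : Continuous (fun x => (g x : ℂ)) := by fun_prop
    obtain ⟨C, hC⟩ := isCompact_Icc.exists_bound_of_continuousOn (h1.continuousOn (s := Icc (0:ℝ) 1))
    refine MemLp.of_bound h1.aestronglyMeasurable C ?_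
    filter_upwards [ae_restrict_mem measurableSet_Ioc] with x hx
    exact hC x (Ioc_subset_Icc_self hx)
  have S1 := hasSum_sq_fourierCoeffOn (zero_lt_one' ℝ) (hL q hqc)
  have S2 := hasSum_sq_fourierCoeffOn (zero_lt_one' ℝ) (hL q' hq')
  simp only [sub_zero, inv_one, one_smul, Complex.norm_real, Real.norm_eq_abs, sq_abs] at S1 S2
  refine hasSum_le ?_ (S1.mul_left (4 * π ^ 2)) S2
  intro n
  by_cases hn : n = 0
  · subst hn
    have : fourierCoeffOn (zero_lt_one' ℝ) (fun x => (q x : ℂ)) 0 = 0 := by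
      rw [fourierCoeffOn_eq_integral]
      simp only [neg_zero, fourier_zero, one_smul]
      rw [intervalIntegral.integral_ofReal, hmean]
      simp
    rw [this]
    simp
  · have h := fourierCoeffOn_of_hasDerivAt (zero_lt_one' ℝ) (f := fun x => (q x : ℂ))
      (f' := fun x => (q' x : ℂ)) hn (fun x _ => (hq x).ofReal_comp)
      ((by fun_prop : Continuous (fun x => (q' x : ℂ))).intervalIntegrable _ _)
    rw [h, hper]
    simp only [sub_self, mul_zero, zero_sub, Complex.ofReal_one, Complex.ofReal_zero, sub_zero,
      one_mul, norm_mul, norm_neg, norm_div, norm_one, Complex.norm_ofNat, Complex.norm_real,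
      Complex.norm_I, Complex.norm_intCast, Real.norm_eq_abs, abs_of_pos pi_pos, mul_one]
    set A := ‖fourierCoeffOn (zero_lt_one' ℝ) (fun x => (q' x : ℂ)) n‖
    have hn1 : (1:ℝ) ≤ |(n:ℝ)| := by
      have := Int.one_le_abs hn
      exact_mod_cast this
    have hp := pi_pos
    have : 4 * π ^ 2 * (1 / (2 * π * |(n:ℝ)|) * A) ^ 2 = A ^ 2 / |(n:ℝ)| ^ 2 := by
      field_simp
      ring
    rw [this]
    exact div_le_self (by positivity) (one_le_pow₀ hn1)

/-- The spatial inequality behind monotonicity along the heat flow. -/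
lemma key_spatial (v v1 v2 v3 : ℝ → ℝ) (h0 : ∀ x, HasDerivAt v (v1 x) x)
    (h1 : ∀ x, HasDerivAt v1 (v2 x) x) (h2 : ∀ x, HasDerivAt v2 (v3 x) x) (h3 : Continuous v3)
    (hpos : ∀ x, 0 < v x) (p0 : v 1 = v 0) (p1 : v1 1 = v1 0) (p2 : v2 1 = v2 0) :
    0 ≤ ∫ x in (0:ℝ)..1, ((Real.log (v x) + 1) * v2 x
      - (1 / (8 * π ^ 2)) * (2 * v1 x * v3 x / v x - v1 x ^ 2 * v2 x / v x ^ 2)) := by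
  have c0 : Continuous v := continuous_iff_continuousAt.2 fun x => (h0 x).continuousAt
  have c1 : Continuous v1 := continuous_iff_continuousAt.2 fun x => (h1 x).continuousAt
  have c2 : Continuous v2 := continuous_iff_continuousAt.2 fun x => (h2 x).continuousAt
  have hne : ∀ x, v x ≠ 0 := fun x => (hpos x).ne'
  have hsp : ∀ x, 0 < √(v x) := fun x => Real.sqrt_pos.2 (hpos x)
  have hs : ∀ x, √(v x) ≠ 0 := fun x => (hsp x).ne'
  have hsq : ∀ x, √(v x) ^ 2 = v x := fun x => Real.sq_sqrt (hpos x).le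
  have hp := pi_pos
  set c : ℝ := 1 / (8 * π ^ 2) with hc
  have hcpos : 0 < c := by positivity
  have dh : ∀ x, HasDerivAt (fun x => √(v x)) (v1 x / (2 * √(v x))) x :=
    fun x => (h0 x).sqrt (hne x)
  let q : ℝ → ℝ := fun x => v1 x / (2 * √(v x))
  let q' : ℝ → ℝ := fun x => v2 x / (2 * √(v x)) - v1 x ^ 2 / (4 * √(v x) ^ 3)
  have dq : ∀ x, HasDerivAt q (q' x) x := by
    intro x
    have := (h1 x).div ((dh x).const_mul 2) (by have := hs x; positivity)
    refine this.congr_deriv ?_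
    simp only [q']
    have := hs x
    field_simp
    ring
  have cq : Continuous q := continuous_iff_continuousAt.2 fun x => (dq x).continuousAt
  have cq' : Continuous q' := by
    simp only [q']
    refine Continuous.sub (c2.div (by fun_prop) ?_) ((c1.pow 2).div (by fun_prop) ?_) <;>
    · intro x; have := hs x; positivity
  have W := wirtinger_aux q q' dq cq' (by simp only [q, p0, p1]) (by
    rw [intervalIntegral.integral_eq_sub_of_hasDerivAt (fun x _ => dh x) (cq.intervalIntegrable _ _), p0, sub_self])
  let G : ℝ → ℝ := fun x => (Real.log (v x) + 1) * v1 x - 2 * c * (v1 x * v2 x / v x)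
    + c / 3 * (v1 x ^ 3 / v x ^ 2)
  let G' : ℝ → ℝ := fun x => (v1 x / v x * v1 x + (Real.log (v x) + 1) * v2 x)
    - 2 * c * (((v2 x * v2 x + v1 x * v3 x) * v x - v1 x * v2 x * v1 x) / v x ^ 2)
    + c / 3 * ((3 * v1 x ^ 2 * v2 x * v x ^ 2 - v1 x ^ 3 * (2 * v x * v1 x)) / (v x ^ 2) ^ 2)
  have dG : ∀ x, HasDerivAt G (G' x) x := by
    intro x
    have a1 := (((h0 x).log (hne x)).add_const 1).mul (h1 x)
    have a2 := (((h1 x).mul (h2 x)).div (h0 x) (hne x)).const_mul (2 * c)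
    have a3 := (((h1 x).pow 3).div ((h0 x).pow 2) (pow_ne_zero 2 (hne x))).const_mul (c / 3)
    refine ((a1.sub a2).add a3).congr_deriv ?_
    simp only [G', Pi.pow_apply, Pi.mul_apply]
    push_cast
    ring
  have cG' : Continuous G' := by
    have hne2 : ∀ x, v x ^ 2 ≠ 0 := fun x => pow_ne_zero 2 (hne x)
    have hne4 : ∀ x, (v x ^ 2) ^ 2 ≠ 0 := fun x => pow_ne_zero 2 (hne2 x)
    have clog : Continuous fun x => Real.log (v x) := c0.log hne
    simp only [G']
    fun_prop (disch := assumption)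
  have IG : ∫ x in (0:ℝ)..1, G' x = 0 := by
    rw [intervalIntegral.integral_eq_sub_of_hasDerivAt (fun x _ => dG x) (cG'.intervalIntegrable _ _)]
    simp only [G, p0, p1, p2, sub_self]
  have cw : Continuous fun x => v1 x ^ 4 / v x ^ 3 :=
    (c1.pow 4).div (c0.pow 3) (fun x => pow_ne_zero 3 (hne x))
  have Iw : 0 ≤ ∫ x in (0:ℝ)..1, v1 x ^ 4 / v x ^ 3 :=
    intervalIntegral.integral_nonneg zero_le_one fun x _ => by have := hpos x; positivity
  have E : ∀ x, (Real.log (v x) + 1) * v2 x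
      - c * (2 * v1 x * v3 x / v x - v1 x ^ 2 * v2 x / v x ^ 2) =
      G' x + (8 * c * q' x ^ 2 - 4 * q x ^ 2) + c / 6 * (v1 x ^ 4 / v x ^ 3) := by
    intro x
    have e := hsq x
    have e1 : q x ^ 2 = v1 x ^ 2 / (4 * v x) := by
      simp only [q]; rw [div_pow, mul_pow, e]; norm_num
    have e2 : q' x ^ 2 = (v2 x / 2 - v1 x ^ 2 / (4 * v x)) ^ 2 / v x := by
      have : q' x = (v2 x / 2 - v1 x ^ 2 / (4 * v x)) / √(v x) := by
        simp only [q']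
        rw [pow_succ (√(v x)), e]
        have := hs x
        have := hne x
        field_simp
      rw [this, div_pow, e]
    rw [e1, e2]
    simp only [G']
    have := hne x
    field_simp
    ring
  have i1 : IntervalIntegrable G' volume 0 1 := cG'.intervalIntegrable _ _
  have i2 : IntervalIntegrable (fun x => 8 * c * q' x ^ 2) volume 0 1 :=
    (by fun_prop : Continuous _).intervalIntegrable _ _
  have i3 : IntervalIntegrable (fun x => 4 * q x ^ 2) volume 0 1 :=
    (by fun_prop : Continuous _).intervalIntegrable _ _
  have i4 : IntervalIntegrable (fun x => c / 6 * (v1 x ^ 4 / v x ^ 3)) volume 0 1 :=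
    (by fun_prop : Continuous _).intervalIntegrable _ _
  rw [intervalIntegral.integral_congr (fun x _ => E x), intervalIntegral.integral_add (i1.add (i2.sub i3)) i4,
    intervalIntegral.integral_add i1 (i2.sub i3), intervalIntegral.integral_sub i2 i3, IG, intervalIntegral.integral_const_mul, intervalIntegral.integral_const_mul,
    intervalIntegral.integral_const_mul]
  have : 8 * c * (4 * π ^ 2) = 4 := by rw [hc]; field_simp
  have W2 := mul_le_mul_of_nonneg_left W (by positivity : 0 ≤ 8 * c)
  rw [← mul_assoc, this] at W2
  have := mul_nonneg (by positivity : 0 ≤ c / 6) Iw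
  linarith

lemma param_deriv (k k' : ℝ → ℝ → ℝ) (hk : Continuous fun z : ℝ × ℝ => k |z.1| z.2)
    (hk' : Continuous fun z : ℝ × ℝ => k' |z.1| z.2)
    (hd : ∀ t, 0 < t → ∀ x, HasDerivAt (fun s => k s x) (k' t x) t) (t : ℝ) (ht : 0 < t) :
    HasDerivAt (fun s => ∫ x in (0:ℝ)..1, k s x) (∫ x in (0:ℝ)..1, k' t x) t := by
  obtain ⟨C, hC⟩ := (isCompact_Icc (a := (0:ℝ)) (b := 2 * t) |>.prod
    (isCompact_Icc (a := (0:ℝ)) (b := 1))).exists_bound_of_continuousOn (hk'.continuousOn)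
  have cx : ∀ s, 0 < s → Continuous (k s) := by
    intro s hs
    have : Continuous fun x : ℝ => k |s| x := hk.comp (by fun_prop : Continuous fun x : ℝ => (s, x))
    rwa [abs_of_pos hs] at this
  have cx' : ∀ s, 0 < s → Continuous (k' s) := by
    intro s hs
    have : Continuous fun x : ℝ => k' |s| x :=
      hk'.comp (by fun_prop : Continuous fun x : ℝ => (s, x))
    rwa [abs_of_pos hs] at this
  refine (intervalIntegral.hasDerivAt_integral_of_dominated_loc_of_deriv_le (F := k) (F' := k')
    (bound := fun _ => C) (s := Ioo 0 (2 * t)) (Ioo_mem_nhds ht (by linarith)) ?_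
    ((cx t ht).intervalIntegrable _ _) (cx' t ht).aestronglyMeasurable ?_ ?_ ?_).2
  · filter_upwards [Ioi_mem_nhds ht] with s hs
    exact (cx s hs).aestronglyMeasurable
  · refine ae_of_all _ fun x hx s hs => ?_
    rw [uIoc_of_le zero_le_one] at hx
    have := hC (s, x) ⟨⟨hs.1.le, hs.2.le⟩, ⟨hx.1.le, hx.2⟩⟩
    simpa [abs_of_pos hs.1] using this
  · exact intervalIntegrable_const
  · exact ae_of_all _ fun x _ s hs => hd s hs.1 x

/-- The log-Sobolev inequality from a heat flow. -/
lemma flow_lsi (u u1 u2 u3 : ℝ → ℝ → ℝ)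
    (c0 : Continuous fun z : ℝ × ℝ => u z.1 z.2) (c1 : Continuous fun z : ℝ × ℝ => u1 z.1 z.2)
    (c2 : Continuous fun z : ℝ × ℝ => u2 z.1 z.2) (c3 : Continuous fun z : ℝ × ℝ => u3 z.1 z.2)
    (h0 : ∀ t x, HasDerivAt (u t) (u1 t x) x) (h1 : ∀ t x, HasDerivAt (u1 t) (u2 t x) x)
    (h2 : ∀ t x, HasDerivAt (u2 t) (u3 t x) x)
    (d0 : ∀ t x, HasDerivAt (fun s => u s x) (u2 t x) t)
    (d1 : ∀ t x, HasDerivAt (fun s => u1 s x) (u3 t x) t)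
    (p0 : ∀ t, u t 1 = u t 0) (p1 : ∀ t, u1 t 1 = u1 t 0) (p2 : ∀ t, u2 t 1 = u2 t 0)
    (m B M : ℝ) (hm : 0 < m) (hlow : ∀ t, 0 ≤ t → ∀ x, m ≤ u t x)
    (hup : ∀ t, 0 ≤ t → ∀ x, u t x ≤ B)
    (hlim : ∀ x, Tendsto (fun t => u t x) atTop (𝓝 M)) :
    (∫ x in (0:ℝ)..1, u 0 x * Real.log (u 0 x)) - M * Real.log M ≤
      (1 / (8 * π ^ 2)) * ∫ x in (0:ℝ)..1, u1 0 x ^ 2 / u 0 x := by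
  have hp := pi_pos
  set c : ℝ := 1 / (8 * π ^ 2) with hc
  have hcpos : 0 < c := by positivity
  have hpos : ∀ t, 0 ≤ t → ∀ x, 0 < u t x := fun t ht x => hm.trans_le (hlow t ht x)
  let k : ℝ → ℝ → ℝ := fun t x => u t x * Real.log (u t x) - c * (u1 t x ^ 2 / u t x)
  let k' : ℝ → ℝ → ℝ := fun t x => ((Real.log (u t x) + 1) * u2 t x
      - c * (2 * u1 t x * u3 t x / u t x - u1 t x ^ 2 * u2 t x / u t x ^ 2))
  have A0 : Continuous fun z : ℝ × ℝ => u |z.1| z.2 :=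
    c0.comp (by fun_prop : Continuous fun z : ℝ × ℝ => (|z.1|, z.2))
  have A1 : Continuous fun z : ℝ × ℝ => u1 |z.1| z.2 :=
    c1.comp (by fun_prop : Continuous fun z : ℝ × ℝ => (|z.1|, z.2))
  have A2 : Continuous fun z : ℝ × ℝ => u2 |z.1| z.2 :=
    c2.comp (by fun_prop : Continuous fun z : ℝ × ℝ => (|z.1|, z.2))
  have A3 : Continuous fun z : ℝ × ℝ => u3 |z.1| z.2 :=
    c3.comp (by fun_prop : Continuous fun z : ℝ × ℝ => (|z.1|, z.2))
  have hne : ∀ z : ℝ × ℝ, u |z.1| z.2 ≠ 0 := fun z => (hpos _ (abs_nonneg _) _).ne'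
  have hne2 : ∀ z : ℝ × ℝ, u |z.1| z.2 ^ 2 ≠ 0 := fun z => pow_ne_zero 2 (hne z)
  have Al : Continuous fun z : ℝ × ℝ => Real.log (u |z.1| z.2) := A0.log hne
  have ck : Continuous fun z : ℝ × ℝ => k |z.1| z.2 := by
    simp only [k]
    fun_prop (disch := assumption)
  have ck' : Continuous fun z : ℝ × ℝ => k' |z.1| z.2 := by
    simp only [k']
    fun_prop (disch := assumption)
  have dk : ∀ t, 0 < t → ∀ x, HasDerivAt (fun s => k s x) (k' t x) t := by
    intro t ht x
    have hn := (hpos t ht.le x).ne'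
    have a1 := (d0 t x).mul ((d0 t x).log hn)
    have a2 := ((((d1 t x).pow 2).div (d0 t x) hn)).const_mul c
    refine (a1.sub a2).congr_deriv ?_
    simp only [k', Pi.pow_apply]
    push_cast
    field_simp
  let K : ℝ → ℝ := fun t => ∫ x in (0:ℝ)..1, k t x
  have dK := param_deriv k k' ck ck' dk
  have cK : ContinuousOn K (Ici 0) := by
    have : Continuous fun t : ℝ => ∫ x in (0:ℝ)..1, k |t| x :=
      intervalIntegral.continuous_parametric_intervalIntegral_of_continuous' (f := fun t x => k |t| x) ck 0 1
    refine this.continuousOn.congr fun t ht => ?_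
    simp only [K, abs_of_nonneg (mem_Ici.1 ht)]
  have mK : MonotoneOn K (Ici 0) := by
    refine monotoneOn_of_deriv_nonneg (convex_Ici 0) cK ?_ ?_
    · intro t ht
      rw [interior_Ici] at ht
      exact (dK t ht).differentiableAt.differentiableWithinAt
    · intro t ht
      rw [interior_Ici] at ht
      rw [(dK t ht).deriv]
      exact key_spatial (u t) (u1 t) (u2 t) (u3 t) (h0 t) (h1 t) (h2 t)
        (c3.comp (by fun_prop : Continuous fun x : ℝ => (t, x))) (hpos t (le_of_lt ht))
        (p0 t) (p1 t) (p2 t)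
  have c0x : ∀ t, Continuous (u t) := fun t => c0.comp (by fun_prop : Continuous fun x : ℝ => (t, x))
  have c1x : ∀ t, Continuous (u1 t) := fun t => c1.comp (by fun_prop : Continuous fun x : ℝ => (t, x))
  have cH : ∀ t, 0 ≤ t → Continuous fun x => u t x * Real.log (u t x) := fun t ht =>
    (c0x t).mul ((c0x t).log fun x => (hpos t ht x).ne')
  have cI : ∀ t, 0 ≤ t → Continuous fun x => u1 t x ^ 2 / u t x := fun t ht =>
    ((c1x t).pow 2).div (c0x t) fun x => (hpos t ht x).ne'
  have Ksplit : ∀ t, 0 ≤ t → K t = (∫ x in (0:ℝ)..1, u t x * Real.log (u t x))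
      - c * ∫ x in (0:ℝ)..1, u1 t x ^ 2 / u t x := by
    intro t ht
    simp only [K, k]
    rw [intervalIntegral.integral_sub ((cH t ht).intervalIntegrable _ _)
      (((cI t ht).const_mul c).intervalIntegrable _ _), intervalIntegral.integral_const_mul]
  have hMm : m ≤ M := ge_of_tendsto (hlim 0)
    ((eventually_ge_atTop 0).mono fun t ht => hlow t ht 0)
  have hM : 0 < M := hm.trans_le hMm
  obtain ⟨C, hC⟩ := (isCompact_Icc (a := m) (b := B)).exists_bound_of_continuousOn
    (f := fun y => y * Real.log y) Real.continuous_mul_log.continuousOn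
  have lim : Tendsto (fun t => ∫ x in (0:ℝ)..1, u t x * Real.log (u t x)) atTop
      (𝓝 (∫ x in (0:ℝ)..1, M * Real.log M)) := by
    refine intervalIntegral.tendsto_integral_filter_of_dominated_convergence (fun _ => C) ?_ ?_ ?_ ?_
    · filter_upwards [eventually_ge_atTop 0] with t ht
      exact (cH t ht).aestronglyMeasurable
    · filter_upwards [eventually_ge_atTop 0] with t ht
      exact ae_of_all _ fun x _ => hC _ ⟨hlow t ht x, hup t ht x⟩
    · exact intervalIntegrable_const
    · exact ae_of_all _ fun x _ => (hlim x).mul ((hlim x).log hM.ne')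
  simp only [intervalIntegral.integral_const, sub_zero, one_smul] at lim
  have fin : K 0 ≤ M * Real.log M := by
    refine ge_of_tendsto lim ((eventually_ge_atTop 0).mono fun t ht => ?_)
    have a := mK (mem_Ici.2 le_rfl) (mem_Ici.2 ht) ht
    rw [Ksplit t ht] at a
    have : 0 ≤ c * ∫ x in (0:ℝ)..1, u1 t x ^ 2 / u t x :=
      mul_nonneg hcpos.le (intervalIntegral.integral_nonneg zero_le_one fun x _ => by
        have := hpos t ht x; positivity)
    linarith
  rw [Ksplit 0 le_rfl] at fin
  linarith

/-- The heat flow of a trigonometric polynomial (and its spatial derivatives). -/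
def trigU (s : Finset ℤ) (c : ℤ → ℂ) (k : ℕ) (t x : ℝ) : ℂ :=
  ∑ n ∈ s, c n * (2 * π * Complex.I * n) ^ k *
    Complex.exp ((2 * π * Complex.I * n) ^ 2 * t + 2 * π * Complex.I * n * x)

lemma trigU_cont (s : Finset ℤ) (c : ℤ → ℂ) (k : ℕ) :
    Continuous fun z : ℝ × ℝ => (trigU s c k z.1 z.2).re := by
  unfold trigU
  fun_prop

lemma trigU_dx (s : Finset ℤ) (c : ℤ → ℂ) (k : ℕ) (t x : ℝ) :
    HasDerivAt (fun x => (trigU s c k t x).re) (trigU s c (k + 1) t x).re x := by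
  have : HasDerivAt (fun x => trigU s c k t x) (trigU s c (k + 1) t x) x := by
    unfold trigU
    refine HasDerivAt.fun_sum fun n _ => ?_
    have h := (((((hasDerivAt_id x).ofReal_comp).const_mul (2 * π * Complex.I * n)).const_add
      ((2 * π * Complex.I * n) ^ 2 * t)).cexp).const_mul (c n * (2 * π * Complex.I * n) ^ k)
    refine h.congr_deriv ?_
    simp only [id]
    push_cast
    ring
  exact Complex.reCLM.hasFDerivAt.comp_hasDerivAt _ this

lemma trigU_dt (s : Finset ℤ) (c : ℤ → ℂ) (k : ℕ) (t x : ℝ) :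
    HasDerivAt (fun t => (trigU s c k t x).re) (trigU s c (k + 2) t x).re t := by
  have : HasDerivAt (fun t => trigU s c k t x) (trigU s c (k + 2) t x) t := by
    unfold trigU
    refine HasDerivAt.fun_sum fun n _ => ?_
    have h := (((((hasDerivAt_id t).ofReal_comp).const_mul ((2 * π * Complex.I * n) ^ 2)).add_const
      (2 * π * Complex.I * n * x)).cexp).const_mul (c n * (2 * π * Complex.I * n) ^ k)
    refine h.congr_deriv ?_
    simp only [id]
    push_cast
    ring
  exact Complex.reCLM.hasFDerivAt.comp_hasDerivAt _ this

lemma trigU_per (s : Finset ℤ) (c : ℤ → ℂ) (k : ℕ) (t x : ℝ) :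
    trigU s c k t (x + 1) = trigU s c k t x := by
  unfold trigU
  refine Finset.sum_congr rfl fun n _ => ?_
  congr 1
  have : (2 * π * Complex.I * n) ^ 2 * t + 2 * π * Complex.I * n * ((x + 1 : ℝ) : ℂ) =
    ((2 * π * Complex.I * n) ^ 2 * t + 2 * π * Complex.I * n * x) + n * (2 * π * Complex.I) := by
    push_cast; ring
  rw [this, Complex.exp_add, Complex.exp_int_mul_two_pi_mul_I, mul_one]

lemma trigU_lim (s : Finset ℤ) (c : ℤ → ℂ) (x : ℝ) :
    Tendsto (fun t => (trigU s c 0 t x).re) atTop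
      (𝓝 (∑ n ∈ s, if n = 0 then c n else 0).re) := by
  refine (Complex.continuous_re.tendsto _).comp ?_
  unfold trigU
  refine tendsto_finsetSum _ fun n _ => ?_
  by_cases hn : n = 0
  · simp [hn]
  · rw [if_neg hn, tendsto_zero_iff_norm_tendsto_zero]
    have e : ∀ t : ℝ, ‖c n * (2 * π * Complex.I * n) ^ 0 *
        Complex.exp ((2 * π * Complex.I * n) ^ 2 * t + 2 * π * Complex.I * n * x)‖ =
        ‖c n‖ * Real.exp (-((2 * π * n) ^ 2 * t)) := by
      intro t
      rw [norm_mul, Complex.norm_exp, pow_zero, mul_one]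
      congr 2
      have : (2 * π * Complex.I * n) ^ 2 * t + 2 * π * Complex.I * n * x =
        ((-((2 * π * n) ^ 2 * t) : ℝ) : ℂ) + ((2 * π * n * x : ℝ) : ℂ) * Complex.I := by
        push_cast
        linear_combination (4 * (π:ℂ) ^ 2 * n ^ 2 * t) * Complex.I_sq
      rw [this, Complex.add_re, Complex.ofReal_re, Complex.re_ofReal_mul, Complex.I_re]
      ring
    simp only [e]
    have hpos : 0 < (2 * π * n) ^ 2 := by
      have := pi_pos
      have : (n:ℝ) ≠ 0 := by exact_mod_cast hn
      positivity
    have := (Real.tendsto_exp_neg_atTop_nhds_zero.comp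
      (tendsto_id.const_mul_atTop hpos)).const_mul ‖c n‖
    simpa using this

lemma trigU_mean (s : Finset ℤ) (c : ℤ → ℂ) :
    ∫ x in (0:ℝ)..1, (trigU s c 0 0 x).re = (∑ n ∈ s, if n = 0 then c n else 0).re := by
  have hc : Continuous fun x : ℝ => trigU s c 0 0 x := by unfold trigU; fun_prop
  have h1 : ∫ x in (0:ℝ)..1, (trigU s c 0 0 x).re = (∫ x in (0:ℝ)..1, trigU s c 0 0 x).re := by
    have := Complex.reCLM.intervalIntegral_comp_comm (hc.intervalIntegrable (μ := volume) 0 1)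
    simpa using this
  rw [h1]
  congr 1
  unfold trigU
  rw [intervalIntegral.integral_finsetSum]
  · refine Finset.sum_congr rfl fun n _ => ?_
    rw [intervalIntegral.integral_const_mul]
    by_cases hn : n = 0
    · simp [hn]
    · rw [if_neg hn]
      have hw : 2 * π * Complex.I * n ≠ 0 := by
        have := pi_ne_zero
        simp [hn, this]
      simp only [Complex.ofReal_zero, mul_zero, zero_add]
      rw [integral_exp_mul_complex hw]
      have : 2 * π * Complex.I * n * ((1:ℝ):ℂ) = n * (2 * π * Complex.I) := by push_cast; ring
      rw [this, Complex.exp_int_mul_two_pi_mul_I]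
      simp
  · intro n _
    exact (by fun_prop : Continuous _).intervalIntegrable _ _

lemma trigU_gauss (s : Finset ℤ) (c : ℤ → ℂ) (t x : ℝ) (ht : 0 ≤ t) :
    (trigU s c 0 t x).re =
      ∫ z, (trigU s c 0 0 (x + √(2 * t) * z)).re ∂(ProbabilityTheory.gaussianReal 0 1) := by
  have hi : ∀ n ∈ s, Integrable (fun z : ℝ => c n * (2 * π * Complex.I * n) ^ 0 *
      Complex.exp ((2 * π * Complex.I * n) ^ 2 * (0:ℝ) +
        2 * π * Complex.I * n * ((x + √(2 * t) * z : ℝ) : ℂ)))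
      (ProbabilityTheory.gaussianReal 0 1) := by
    intro n _
    refine Integrable.of_bound (C := ‖c n‖) (by fun_prop : Continuous _).aestronglyMeasurable
      (ae_of_all _ fun z => ?_)
    rw [norm_mul, Complex.norm_exp, pow_zero, mul_one]
    simp
  have hU : Integrable (fun z : ℝ => trigU s c 0 0 (x + √(2 * t) * z))
      (ProbabilityTheory.gaussianReal 0 1) := by
    unfold trigU
    exact integrable_finsetSum _ hi
  have h1 : ∫ z, (trigU s c 0 0 (x + √(2 * t) * z)).re ∂(ProbabilityTheory.gaussianReal 0 1) =
      (∫ z, trigU s c 0 0 (x + √(2 * t) * z) ∂(ProbabilityTheory.gaussianReal 0 1)).re := by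
    have := Complex.reCLM.integral_comp_comm hU
    simpa using this
  rw [h1]
  congr 1
  unfold trigU
  rw [integral_finsetSum _ hi]
  refine Finset.sum_congr rfl fun n _ => ?_
  rw [integral_const_mul]
  congr 1
  have cf := ProbabilityTheory.charFun_gaussianReal (μ := 0) (v := 1) (2 * π * n * √(2 * t))
  rw [charFun_apply_real] at cf
  have e : ∀ z : ℝ, Complex.exp ((2 * π * Complex.I * n) ^ 2 * (0:ℝ) +
        2 * π * Complex.I * n * ((x + √(2 * t) * z : ℝ) : ℂ)) =
      Complex.exp (2 * π * Complex.I * n * x) *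
        Complex.exp (((2 * π * n * √(2 * t) : ℝ) : ℂ) * z * Complex.I) := by
    intro z
    rw [← Complex.exp_add]
    congr 1
    push_cast
    ring
  simp only [e]
  rw [integral_const_mul, cf, ← Complex.exp_add]
  congr 1
  have hs : ((√(2 * t) : ℝ) : ℂ) ^ 2 = 2 * t := by
    rw [← Complex.ofReal_pow, Real.sq_sqrt (by positivity)]
    push_cast; ring
  push_cast
  linear_combination (4 * (π:ℂ) ^ 2 * n ^ 2 * t) * Complex.I_sq + (2 * (π:ℂ) ^ 2 * n ^ 2) * hs

lemma trigU_bound (s : Finset ℤ) (c : ℤ → ℂ) (x : ℝ) :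
    |(trigU s c 0 0 x).re| ≤ ∑ n ∈ s, ‖c n‖ := by
  unfold trigU
  refine (Complex.abs_re_le_norm _).trans ((norm_sum_le _ _).trans (Finset.sum_le_sum fun n _ => ?_))
  rw [norm_mul, Complex.norm_exp, pow_zero, mul_one]
  simp

attribute [irreducible] trigU

lemma trig_lsi (s : Finset ℤ) (c : ℤ → ℂ) (m : ℝ) (hm : 0 < m)
    (hlow : ∀ x, m ≤ (trigU s c 0 0 x).re) :
    (∫ x in (0:ℝ)..1, (trigU s c 0 0 x).re * Real.log (trigU s c 0 0 x).re) -
      (∫ x in (0:ℝ)..1, (trigU s c 0 0 x).re) *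
        Real.log (∫ x in (0:ℝ)..1, (trigU s c 0 0 x).re) ≤
      (1 / (8 * π ^ 2)) * ∫ x in (0:ℝ)..1, (trigU s c 1 0 x).re ^ 2 / (trigU s c 0 0 x).re := by
  have hup := trigU_bound s c
  have hcont : Continuous fun x => (trigU s c 0 0 x).re :=
    (trigU_cont s c 0).comp (by fun_prop : Continuous fun x : ℝ => ((0:ℝ), x))
  have hint : ∀ t x, Integrable (fun z => (trigU s c 0 0 (x + √(2 * t) * z)).re)
      (ProbabilityTheory.gaussianReal 0 1) := by
    intro t x
    refine Integrable.of_bound (C := ∑ n ∈ s, ‖c n‖)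
      (hcont.comp (by fun_prop)).aestronglyMeasurable (ae_of_all _ fun z => hup _)
  have per : ∀ k t, (trigU s c k t 1).re = (trigU s c k t 0).re := by
    intro k t
    have := trigU_per s c k t 0
    rw [zero_add] at this
    rw [this]
  rw [trigU_mean]
  refine flow_lsi (fun t x => (trigU s c 0 t x).re) (fun t x => (trigU s c 1 t x).re)
    (fun t x => (trigU s c 2 t x).re) (fun t x => (trigU s c 3 t x).re)
    (trigU_cont s c 0) (trigU_cont s c 1) (trigU_cont s c 2) (trigU_cont s c 3)
    (trigU_dx s c 0) (trigU_dx s c 1) (trigU_dx s c 2) (trigU_dt s c 0) (trigU_dt s c 1)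
    (per 0) (per 1) (per 2) m (∑ n ∈ s, ‖c n‖) _ hm ?_ ?_ (trigU_lim s c)
  · intro t ht x
    rw [trigU_gauss s c t x ht]
    calc m = ∫ _, m ∂(ProbabilityTheory.gaussianReal 0 1) := by simp
      _ ≤ _ := integral_mono (integrable_const _) (hint t x) fun z => hlow _
  · intro t ht x
    rw [trigU_gauss s c t x ht]
    calc _ ≤ ∫ _, (∑ n ∈ s, ‖c n‖) ∂(ProbabilityTheory.gaussianReal 0 1) :=
          integral_mono (hint t x) (integrable_const _) fun z => (le_abs_self _).trans (hup _)
      _ = _ := by simp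

lemma trig_dense (g : ℝ → ℝ) (hg : Continuous g) (hper : ∀ x, g (x + 1) = g x) (δ : ℝ)
    (hδ : 0 < δ) : ∃ (s : Finset ℤ) (c : ℤ → ℂ), 0 ∈ s ∧
      ∀ x, |(trigU s c 0 0 x).re - g x| ≤ δ := by
  have hP : Function.Periodic (fun x => (g x : ℂ)) 1 := fun x => by simp [hper x]
  let G : C(AddCircle (1:ℝ), ℂ) := ⟨hP.lift, by
    refine continuous_coinduced_dom.2 ?_
    exact (by fun_prop : Continuous fun x => (g x : ℂ))⟩
  have hG : G ∈ (Submodule.span ℂ (range <| @fourier (1:ℝ))).topologicalClosure := by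
    rw [span_fourier_closure_eq_top]; trivial
  obtain ⟨h, hh, hd⟩ := Metric.mem_closure_iff.1 hG δ hδ
  obtain ⟨c, hc⟩ := (Finsupp.mem_span_range_iff_exists_finsupp).1 hh
  refine ⟨insert 0 c.support, c, Finset.mem_insert_self _ _, fun x => ?_⟩
  have e : trigU (insert 0 c.support) c 0 0 x = h (x : AddCircle (1:ℝ)) := by
    rw [← hc, Finsupp.sum_of_support_subset c (Finset.subset_insert 0 c.support) _ (by simp)]
    unfold trigU
    rw [ContinuousMap.sum_apply]
    refine Finset.sum_congr rfl fun n _ => ?_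
    rw [ContinuousMap.smul_apply, fourier_coe_apply]
    simp
  have e2 : G (x : AddCircle (1:ℝ)) = (g x : ℂ) := rfl
  have h1 : ‖h (x : AddCircle (1:ℝ)) - G (x : AddCircle (1:ℝ))‖ ≤ δ := by
    rw [← dist_eq_norm, dist_comm]
    exact (ContinuousMap.dist_apply_le_dist _).trans hd.le
  rw [e2, ← e] at h1
  have := (Complex.abs_re_le_norm _).trans h1
  simpa using this

lemma trig_approx (f f' : ℝ → ℝ) (hf : ∀ x, HasDerivAt f (f' x) x) (hf' : Continuous f')
    (hper : ∀ x, f (x + 1) = f x) (ε : ℝ) (hε : 0 < ε) :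
    ∃ (s : Finset ℤ) (c : ℤ → ℂ), ∀ x ∈ Icc (0:ℝ) 1,
      |(trigU s c 0 0 x).re - f x| ≤ ε ∧ |(trigU s c 1 0 x).re - f' x| ≤ ε := by
  have hper' : ∀ x, f' (x + 1) = f' x := by
    intro x
    have h1 := (hf (x + 1)).comp_add_const x 1
    simp only [hper] at h1
    exact h1.unique (hf x)
  obtain ⟨s, c, h0, hsc⟩ := trig_dense f' hf' hper' (ε / 2) (by positivity)
  have hpc : Continuous fun x => (trigU s c 0 0 x).re :=
    (trigU_cont s c 0).comp (by fun_prop : Continuous fun x : ℝ => ((0:ℝ), x))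
  have hc0 : |(c 0).re| ≤ ε / 2 := by
    have e1 := trigU_mean s c
    rw [Finset.sum_ite_eq' s 0 c, if_pos h0] at e1
    have e2 : ∫ x in (0:ℝ)..1, f' x = 0 := by
      rw [intervalIntegral.integral_eq_sub_of_hasDerivAt (fun x _ => hf x)
        (hf'.intervalIntegrable _ _)]
      have := hper 0
      rw [zero_add] at this
      rw [this, sub_self]
    have e3 : (c 0).re = ∫ x in (0:ℝ)..1, ((trigU s c 0 0 x).re - f' x) := by
      rw [intervalIntegral.integral_sub (hpc.intervalIntegrable _ _) (hf'.intervalIntegrable _ _),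
        e1, e2, sub_zero]
    rw [e3]
    have := intervalIntegral.norm_integral_le_of_norm_le_const (a := (0:ℝ)) (b := 1)
      (f := fun x => (trigU s c 0 0 x).re - f' x) (C := ε / 2) (fun x _ => hsc x)
    simpa using this
  let w : ℤ → ℂ := fun n => 2 * π * Complex.I * n
  let r : ℂ := ∑ n ∈ s.erase 0, c n / w n
  let c' : ℤ → ℂ := fun n => if n = 0 then ((f 0 - r.re : ℝ) : ℂ) else c n / w n
  have hw : ∀ n, n ≠ 0 → w n ≠ 0 := by
    intro n hn
    have := pi_ne_zero
    simp [w, hn, this]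
  have E0 : (trigU s c' 0 0 0).re = f 0 := by
    unfold trigU
    rw [← Finset.add_sum_erase s _ h0]
    have : ∑ n ∈ s.erase 0, c' n * (2 * π * Complex.I * n) ^ 0 *
        Complex.exp ((2 * π * Complex.I * n) ^ 2 * (0:ℝ) + 2 * π * Complex.I * n * (0:ℝ)) = r := by
      refine Finset.sum_congr rfl fun n hn => ?_
      simp [c', Finset.ne_of_mem_erase hn]
    rw [this]
    simp [c']
  have E1 : ∀ x, trigU s c' 1 0 x = trigU s c 0 0 x - c 0 := by
    intro x
    unfold trigU
    rw [← Finset.add_sum_erase s _ h0, ← Finset.add_sum_erase s (fun n => c n * _ * _) h0]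
    have : ∑ n ∈ s.erase 0, c' n * (2 * π * Complex.I * n) ^ 1 *
        Complex.exp ((2 * π * Complex.I * n) ^ 2 * (0:ℝ) + 2 * π * Complex.I * n * x) =
        ∑ n ∈ s.erase 0, c n * (2 * π * Complex.I * n) ^ 0 *
        Complex.exp ((2 * π * Complex.I * n) ^ 2 * (0:ℝ) + 2 * π * Complex.I * n * x) := by
      refine Finset.sum_congr rfl fun n hn => ?_
      have hn0 := Finset.ne_of_mem_erase hn
      have := hw n hn0
      simp only [c', if_neg hn0, pow_one, pow_zero, mul_one]
      congr 1
      exact div_mul_cancel₀ _ this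
    rw [this]
    simp
  have D : ∀ x, |(trigU s c' 1 0 x).re - f' x| ≤ ε := by
    intro x
    rw [E1 x, Complex.sub_re]
    have a := hsc x
    rw [abs_le] at a hc0 ⊢
    constructor <;> linarith [a.1, a.2, hc0.1, hc0.2]
  refine ⟨s, c', fun x hx => ⟨?_, D x⟩⟩
  have mv := convex_univ.norm_image_sub_le_of_norm_hasDerivWithin_le
    (f := fun x => (trigU s c' 0 0 x).re - f x) (f' := fun x => (trigU s c' 1 0 x).re - f' x)
    (C := ε) (x := 0) (y := x)
    (fun x _ => ((trigU_dx s c' 0 0 x).sub (hf x)).hasDerivWithinAt) (fun x _ => D x)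
    (mem_univ _) (mem_univ _)
  simp only [E0, sub_self, sub_zero, Real.norm_eq_abs] at mv
  refine mv.trans ?_
  rw [abs_of_nonneg hx.1]
  nlinarith [hx.2]

/-- The one-dimensional log-Sobolev inequality. -/
lemma lsi_one (f f' : ℝ → ℝ) (hf : ∀ x, HasDerivAt f (f' x) x) (hf' : Continuous f')
    (hper : ∀ x, f (x + 1) = f x) (hpos : ∀ x, 0 < f x) :
    (∫ x in (0:ℝ)..1, f x * Real.log (f x)) -
      (∫ x in (0:ℝ)..1, f x) * Real.log (∫ x in (0:ℝ)..1, f x) ≤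
      (1 / (8 * π ^ 2)) * ∫ x in (0:ℝ)..1, f' x ^ 2 / f x := by
  have cf : Continuous f := continuous_iff_continuousAt.2 fun x => (hf x).continuousAt
  obtain ⟨x0, hx0, hmin⟩ := isCompact_Icc.exists_isMinOn (nonempty_Icc.2 (zero_le_one' ℝ))
    cf.continuousOn
  set m := f x0 with hm_def
  have hm : 0 < m := hpos x0
  have hlow : ∀ x ∈ Icc (0:ℝ) 1, m ≤ f x := fun x hx => hmin hx
  obtain ⟨B, hB⟩ := isCompact_Icc.exists_bound_of_continuousOn (cf.continuousOn (s := Icc (0:ℝ) 1))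
  obtain ⟨B', hB'⟩ := isCompact_Icc.exists_bound_of_continuousOn (hf'.continuousOn (s := Icc (0:ℝ) 1))
  let ε : ℕ → ℝ := fun k => min (m / 2) (1 / ((k:ℝ) + 1))
  have hε : ∀ k, 0 < ε k := fun k => lt_min (by positivity) (by positivity)
  have hεlim : Tendsto ε atTop (𝓝 0) :=
    squeeze_zero (fun k => (hε k).le) (fun k => min_le_right _ _)
      tendsto_one_div_add_atTop_nhds_zero_nat
  choose s c hsc using fun k => trig_approx f f' hf hf' hper (ε k) (hε k)
  let p : ℕ → ℝ → ℝ := fun k x => (trigU (s k) (c k) 0 0 x).re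
  let p' : ℕ → ℝ → ℝ := fun k x => (trigU (s k) (c k) 1 0 x).re
  have cp : ∀ k, Continuous (p k) := fun k =>
    (trigU_cont (s k) (c k) 0).comp (by fun_prop : Continuous fun x : ℝ => ((0:ℝ), x))
  have cp' : ∀ k, Continuous (p' k) := fun k =>
    (trigU_cont (s k) (c k) 1).comp (by fun_prop : Continuous fun x : ℝ => ((0:ℝ), x))
  have pl : ∀ k, ∀ x ∈ Icc (0:ℝ) 1, m / 2 ≤ p k x := by
    intro k x hx
    have a := (abs_le.1 (hsc k x hx).1).1
    have b := hlow x hx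
    have : ε k ≤ m / 2 := min_le_left _ _
    simp only [p]
    linarith
  have pper : ∀ k, Function.Periodic (p k) 1 := fun k x => by simp only [p, trigU_per]
  have plow : ∀ k x, m / 2 ≤ p k x := by
    intro k x
    obtain ⟨y, hy, e⟩ := (pper k).exists_mem_Ico₀ one_pos x
    rw [e]
    exact pl k y (Ico_subset_Icc_self hy)
  have pne : ∀ k x, p k x ≠ 0 := fun k x => (lt_of_lt_of_le (by positivity) (plow k x)).ne'
  have hεle : ∀ k, ε k ≤ m / 2 := fun k => min_le_left _ _
  have pup : ∀ k, ∀ x ∈ Icc (0:ℝ) 1, |p k x| ≤ B + m / 2 := by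
    intro k x hx
    have a := abs_le.1 ((hsc k x hx).1.trans (hεle k))
    have b := abs_le.1 (hB x hx)
    rw [abs_le]
    simp only [p]
    constructor <;> linarith [a.1, a.2, b.1, b.2]
  have pup' : ∀ k, ∀ x ∈ Icc (0:ℝ) 1, |p' k x| ≤ B' + m / 2 := by
    intro k x hx
    have a := abs_le.1 ((hsc k x hx).2.trans (hεle k))
    have b := abs_le.1 (hB' x hx)
    rw [abs_le]
    simp only [p']
    constructor <;> linarith [a.1, a.2, b.1, b.2]
  have plim : ∀ x ∈ Icc (0:ℝ) 1, Tendsto (fun k => p k x) atTop (𝓝 (f x)) := fun x hx =>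
    tendsto_iff_norm_sub_tendsto_zero.2
      (squeeze_zero (fun _ => norm_nonneg _) (fun k => (hsc k x hx).1) hεlim)
  have plim' : ∀ x ∈ Icc (0:ℝ) 1, Tendsto (fun k => p' k x) atTop (𝓝 (f' x)) := fun x hx =>
    tendsto_iff_norm_sub_tendsto_zero.2
      (squeeze_zero (fun _ => norm_nonneg _) (fun k => (hsc k x hx).2) hεlim)
  have sub : ∀ x, x ∈ uIoc (0:ℝ) 1 → x ∈ Icc (0:ℝ) 1 := fun x hx => by
    rw [uIoc_of_le zero_le_one] at hx; exact Ioc_subset_Icc_self hx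
  have L1 : Tendsto (fun k => ∫ x in (0:ℝ)..1, p k x) atTop (𝓝 (∫ x in (0:ℝ)..1, f x)) :=
    intervalIntegral.tendsto_integral_filter_of_dominated_convergence (fun _ => B + m / 2)
      (Eventually.of_forall fun k => (cp k).aestronglyMeasurable)
      (Eventually.of_forall fun k => ae_of_all _ fun x hx => pup k x (sub x hx))
      intervalIntegrable_const (ae_of_all _ fun x hx => plim x (sub x hx))
  obtain ⟨C, hC⟩ := (isCompact_Icc (a := -(B + m / 2)) (b := B + m / 2)).exists_bound_of_continuousOn
    (f := fun y => y * Real.log y) Real.continuous_mul_log.continuousOn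
  have L2 : Tendsto (fun k => ∫ x in (0:ℝ)..1, p k x * Real.log (p k x)) atTop
      (𝓝 (∫ x in (0:ℝ)..1, f x * Real.log (f x))) :=
    intervalIntegral.tendsto_integral_filter_of_dominated_convergence (fun _ => C)
      (Eventually.of_forall fun k => (Real.continuous_mul_log.comp (cp k)).aestronglyMeasurable)
      (Eventually.of_forall fun k => ae_of_all _ fun x hx => hC _ (abs_le.1 (pup k x (sub x hx))))
      intervalIntegrable_const (ae_of_all _ fun x hx =>
        (Real.continuous_mul_log.tendsto _).comp (plim x (sub x hx)))
  have L3 : Tendsto (fun k => ∫ x in (0:ℝ)..1, p' k x ^ 2 / p k x) atTop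
      (𝓝 (∫ x in (0:ℝ)..1, f' x ^ 2 / f x)) := by
    refine intervalIntegral.tendsto_integral_filter_of_dominated_convergence
      (fun _ => (B' + m / 2) ^ 2 / (m / 2))
      (Eventually.of_forall fun k => (((cp' k).pow 2).div (cp k) (pne k)).aestronglyMeasurable)
      (Eventually.of_forall fun k => ae_of_all _ fun x hx => ?_)
      intervalIntegrable_const (ae_of_all _ fun x hx =>
        ((plim' x (sub x hx)).pow 2).div (plim x (sub x hx)) (hpos x).ne')
    have h1 := pup' k x (sub x hx)
    have h2 := plow k x
    have h3 : 0 < p k x := lt_of_lt_of_le (by positivity) h2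
    rw [Real.norm_eq_abs, abs_of_nonneg (by positivity), ← sq_abs]
    gcongr
  have Ipos : 0 < ∫ x in (0:ℝ)..1, f x :=
    intervalIntegral.intervalIntegral_pos_of_pos (cf.intervalIntegrable _ _) hpos one_pos
  refine le_of_tendsto_of_tendsto (L2.sub (L1.mul (L1.log Ipos.ne'))) (L3.const_mul _)
    (Eventually.of_forall fun k => ?_)
  exact trig_lsi (s k) (c k) (m / 2) (by positivity) (plow k)

/-- The embedding of the last `d` coordinates. -/
def consL (d : ℕ) : (Fin d → ℝ) →L[ℝ] (Fin (d + 1) → ℝ) :=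
  ContinuousLinearMap.pi (Fin.cons 0 (fun j => ContinuousLinearMap.proj j))

/-- The point with first coordinate `s` and other coordinates `y`. -/
def pt (d : ℕ) (s : ℝ) (y : Fin d → ℝ) : Fin (d + 1) → ℝ :=
  consL d y + s • (Pi.single 0 1 : Fin (d + 1) → ℝ)

lemma consL_zero (d : ℕ) (y : Fin d → ℝ) : consL d y 0 = 0 := by simp [consL]

lemma consL_succ (d : ℕ) (y : Fin d → ℝ) (j : Fin d) : consL d y j.succ = y j := by simp [consL]

lemma consL_single (d : ℕ) (j : Fin d) :
    consL d (Pi.single j 1) = (Pi.single j.succ 1 : Fin (d + 1) → ℝ) := by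
  funext i
  refine Fin.cases ?_ (fun i => ?_) i
  · rw [consL_zero, Pi.single_eq_of_ne (Fin.succ_ne_zero j).symm]
  · rw [consL_succ]
    by_cases h : i = j
    · subst h; simp
    · rw [Pi.single_eq_of_ne h, Pi.single_eq_of_ne (by simpa using h)]

lemma pt_eq (d : ℕ) (s : ℝ) (y : Fin d → ℝ) : pt d s y = Fin.cons s y := by
  funext i
  refine Fin.cases ?_ (fun i => ?_) i
  · simp [pt, consL_zero]
  · simp [pt, consL_succ]

lemma pt_cont (d : ℕ) : Continuous fun z : (Fin d → ℝ) × ℝ => pt d z.2 z.1 := by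
  unfold pt
  fun_prop

lemma fubini_cube (d : ℕ) (g : (Fin (d + 1) → ℝ) → ℝ) (hg : Continuous g) :
    ∫ x in Icc (0 : Fin (d + 1) → ℝ) 1, g x =
      ∫ y in Icc (0 : Fin d → ℝ) 1, ∫ s in (0:ℝ)..1, g (pt d s y) := by
  set e : ℝ × (Fin d → ℝ) ≃ᵐ (Fin (d + 1) → ℝ) :=
    (MeasurableEquiv.piFinSuccAbove (fun _ => ℝ) 0).symm with he_def
  have hem : MeasurePreserving e :=
    (volume_preserving_piFinSuccAbove (fun _ : Fin (d + 1) => ℝ) 0).symm _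
  have he : ∀ z, e z = pt d z.1 z.2 := by
    intro z
    rw [pt_eq]
    simp [he_def, MeasurableEquiv.piFinSuccAbove_symm_apply, Fin.insertNthEquiv]
  have hpre : e ⁻¹' Icc (0 : Fin (d + 1) → ℝ) 1 = Icc (0:ℝ) 1 ×ˢ Icc (0 : Fin d → ℝ) 1 := by
    ext z
    simp only [mem_preimage, mem_Icc, he, pt_eq, mem_prod, Pi.le_def, Fin.forall_fin_succ,
      Fin.cons_zero, Fin.cons_succ, Pi.zero_apply, Pi.one_apply]
    tauto
  rw [← hem.map_eq, setIntegral_map_equiv, hpre, Measure.volume_eq_prod, ← Measure.prod_restrict]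
  have hc : Continuous fun z : ℝ × (Fin d → ℝ) => g (e z) := by
    simp only [he]
    exact hg.comp ((pt_cont d).comp continuous_swap)
  rw [integral_prod_symm]
  · refine integral_congr_ae (ae_of_all _ fun y => ?_)
    simp only [he]
    rw [intervalIntegral.integral_of_le zero_le_one, integral_Icc_eq_integral_Ioc]
  · rw [Measure.prod_restrict, ← Measure.volume_eq_prod]
    exact hc.continuousOn.integrableOn_compact (isCompact_Icc.prod isCompact_Icc)

lemma slice_cont (d : ℕ) {E : Type*} [NormedAddCommGroup E] [NormedSpace ℝ E]
    (g : (Fin (d + 1) → ℝ) → E) (hg : Continuous g) :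
    Continuous fun y => ∫ s in (0:ℝ)..1, g (pt d s y) :=
  intervalIntegral.continuous_parametric_intervalIntegral_of_continuous'
    (f := fun y s => g (pt d s y)) (hg.comp (pt_cont d)) 0 1

lemma marginal_deriv (d : ℕ) (f : (Fin (d + 1) → ℝ) → ℝ) (hf : ContDiff ℝ 1 f) (y : Fin d → ℝ) :
    HasFDerivAt (fun y => ∫ s in (0:ℝ)..1, f (pt d s y))
      (∫ s in (0:ℝ)..1, (fderiv ℝ f (pt d s y)).comp (consL d)) y := by
  have hfd : Continuous (fun x => (fderiv ℝ f x).comp (consL d)) :=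
    (hf.continuous_fderiv (by simp)).clm_comp continuous_const
  obtain ⟨C, hC⟩ := ((isCompact_closedBall y 1).prod
    (isCompact_Icc (a := (0:ℝ)) (b := 1))).exists_bound_of_continuousOn
    (hfd.comp (pt_cont d)).continuousOn
  have cs : ∀ y, Continuous fun s => pt d s y := fun y =>
    (pt_cont d).comp (by fun_prop : Continuous fun s : ℝ => (y, s))
  refine (intervalIntegral.hasFDerivAt_integral_of_dominated_of_fderiv_le
    (F := fun y s => f (pt d s y)) (F' := fun y s => (fderiv ℝ f (pt d s y)).comp (consL d))
    (bound := fun _ => C) (s := Metric.ball y 1) (Metric.ball_mem_nhds y one_pos)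
    (Eventually.of_forall fun z => (hf.continuous.comp (cs z)).aestronglyMeasurable)
    ((hf.continuous.comp (cs y)).intervalIntegrable _ _)
    (hfd.comp (cs y)).aestronglyMeasurable ?_ intervalIntegrable_const ?_)
  · refine ae_of_all _ fun s hs z hz => ?_
    rw [uIoc_of_le zero_le_one] at hs
    exact hC (z, s) ⟨Metric.ball_subset_closedBall hz, Ioc_subset_Icc_self hs⟩
  · refine ae_of_all _ fun s _ z _ => ?_
    have h1 : HasFDerivAt f (fderiv ℝ f (pt d s z)) (pt d s z) :=
      (hf.differentiable (by simp) _).hasFDerivAt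
    have h2 : HasFDerivAt (fun z => pt d s z) (consL d) z := by
      unfold pt
      exact (consL d).hasFDerivAt.add_const _
    exact h1.comp z h2

lemma lsi_pi (d : ℕ) : ∀ (f : (Fin d → ℝ) → ℝ) (_ : ContDiff ℝ 1 f)
    (_ : ∀ (k : Fin d → ℤ) (x : Fin d → ℝ), f (x + fun i => (k i : ℝ)) = f x)
    (_ : ∀ x, 0 < f x),
    (∫ x in Set.Icc (0 : Fin d → ℝ) 1, f x * Real.log (f x)) -
        (∫ x in Set.Icc (0 : Fin d → ℝ) 1, f x) *
          Real.log (∫ x in Set.Icc (0 : Fin d → ℝ) 1, f x) ≤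
      (1 / (8 * π ^ 2)) *
        ∫ x in Set.Icc (0 : Fin d → ℝ) 1,
          (∑ α, (fderiv ℝ f x (Pi.single α 1)) ^ 2) / f x := by
  induction d with
  | zero =>
    intro f _ _ _
    have h : ∀ g : (Fin 0 → ℝ) → ℝ, ∫ x in Icc (0 : Fin 0 → ℝ) 1, g x = g 0 := by
      intro g
      have : Icc (0 : Fin 0 → ℝ) 1 = univ := by
        ext x; simp [Subsingleton.elim x 0, Subsingleton.elim (1 : Fin 0 → ℝ) 0]
      rw [this, Measure.restrict_univ, volume_pi, Measure.pi_of_empty (x := 0), integral_dirac]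
    rw [h, h, h]
    simp
  | succ d ih =>
    intro f hf hper hpos
    have hp := pi_pos
    set c : ℝ := 1 / (8 * π ^ 2) with hc
    have hcpos : 0 < c := by positivity
    have cf := hf.continuous
    have cfd : Continuous (fderiv ℝ f) := hf.continuous_fderiv (by simp)
    have cs : ∀ y, Continuous fun s => pt d s y := fun y =>
      (pt_cont d).comp (by fun_prop : Continuous fun s : ℝ => (y, s))
    have cfl : Continuous fun x => f x * Real.log (f x) := Real.continuous_mul_log.comp cf
    have cA : ∀ v, Continuous fun x => fderiv ℝ f x v := fun v => cfd.clm_apply continuous_const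
    have cQ : ∀ v, Continuous fun x => (fderiv ℝ f x v) ^ 2 / f x := fun v =>
      ((cA v).pow 2).div cf fun x => (hpos x).ne'
    have cS : Continuous fun x => (∑ α, (fderiv ℝ f x (Pi.single α 1)) ^ 2) / f x :=
      (continuous_finsetSum _ fun α _ => (cA _).pow 2).div cf fun x => (hpos x).ne'
    let F : (Fin d → ℝ) → ℝ := fun y => ∫ s in (0:ℝ)..1, f (pt d s y)
    have cF : Continuous F := slice_cont d f cf
    have dF := marginal_deriv d f hf
    have hF1 : ContDiff ℝ 1 F := by
      rw [contDiff_one_iff_fderiv]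
      refine ⟨fun y => (dF y).differentiableAt, ?_⟩
      have : fderiv ℝ F = fun y => ∫ s in (0:ℝ)..1, (fderiv ℝ f (pt d s y)).comp (consL d) :=
        funext fun y => (dF y).fderiv
      rw [this]
      exact slice_cont d (fun x => (fderiv ℝ f x).comp (consL d)) (cfd.clm_comp continuous_const)
    have hFper : ∀ (k : Fin d → ℤ) (y : Fin d → ℝ), F (y + fun i => (k i : ℝ)) = F y := by
      intro k y
      refine intervalIntegral.integral_congr fun s _ => ?_
      have := hper (Fin.cons 0 k) (pt d s y)
      rw [← this]
      congr 1
      rw [pt_eq, pt_eq]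
      funext i
      refine Fin.cases ?_ (fun i => ?_) i <;> simp
    have hFpos : ∀ y, 0 < F y := fun y =>
      intervalIntegral.intervalIntegral_pos_of_pos ((cf.comp (cs y)).intervalIntegrable _ _)
        (fun s => hpos _) one_pos
    have IH := ih F hF1 hFper hFpos
    have cFd : Continuous (fderiv ℝ F) := hF1.continuous_fderiv (by simp)
    have dFj : ∀ y j, fderiv ℝ F y (Pi.single j 1) =
        ∫ s in (0:ℝ)..1, fderiv ℝ f (pt d s y) (Pi.single j.succ 1) := by
      intro y j
      rw [(dF y).fderiv, ContinuousLinearMap.intervalIntegral_apply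
        (((cfd.clm_comp continuous_const).comp (cs y)).intervalIntegrable _ _)]
      simp only [ContinuousLinearMap.comp_apply, consL_single]
    -- Cauchy-Schwarz
    have CS : ∀ y j, (fderiv ℝ F y (Pi.single j 1)) ^ 2 / F y ≤
        ∫ s in (0:ℝ)..1, (fderiv ℝ f (pt d s y) (Pi.single j.succ 1)) ^ 2 / f (pt d s y) := by
      intro y j
      set A := fderiv ℝ F y (Pi.single j 1) with hA
      have hFy := hFpos y
      set l := A / F y with hl
      have i1 : IntervalIntegrable
          (fun s => 2 * l * fderiv ℝ f (pt d s y) (Pi.single j.succ 1)) volume 0 1 :=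
        (((cA _).comp (cs y)).const_mul _).intervalIntegrable _ _
      have i2 : IntervalIntegrable (fun s => l ^ 2 * f (pt d s y)) volume 0 1 :=
        ((cf.comp (cs y)).const_mul _).intervalIntegrable _ _
      have h1 : ∫ s in (0:ℝ)..1, (2 * l * fderiv ℝ f (pt d s y) (Pi.single j.succ 1)
          - l ^ 2 * f (pt d s y)) ≤
          ∫ s in (0:ℝ)..1, (fderiv ℝ f (pt d s y) (Pi.single j.succ 1)) ^ 2 / f (pt d s y) := by
        refine intervalIntegral.integral_mono_on zero_le_one (i1.sub i2)
          (((cQ _).comp (cs y)).intervalIntegrable _ _) fun s _ => ?_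
        have := hpos (pt d s y)
        rw [le_div_iff₀ this]
        nlinarith [sq_nonneg (fderiv ℝ f (pt d s y) (Pi.single j.succ 1) - l * f (pt d s y))]
      rw [intervalIntegral.integral_sub i1 i2, intervalIntegral.integral_const_mul,
        intervalIntegral.integral_const_mul, ← dFj, ← hA] at h1
      refine le_trans (le_of_eq ?_) h1
      change _ = 2 * l * A - l ^ 2 * F y
      rw [hl]
      field_simp
      ring
    have one : ∀ y, (∫ s in (0:ℝ)..1, f (pt d s y) * Real.log (f (pt d s y)))
        - F y * Real.log (F y) ≤
        c * ∫ s in (0:ℝ)..1, (fderiv ℝ f (pt d s y) (Pi.single 0 1)) ^ 2 / f (pt d s y) := by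
      intro y
      refine lsi_one (fun s => f (pt d s y)) (fun s => fderiv ℝ f (pt d s y) (Pi.single 0 1))
        ?_ ((cA _).comp (cs y)) ?_ (fun s => hpos _)
      · intro s
        have h1 : HasFDerivAt f (fderiv ℝ f (pt d s y)) (pt d s y) :=
          (hf.differentiable (by simp) _).hasFDerivAt
        have h2 : HasDerivAt (fun s => pt d s y) (Pi.single 0 1 : Fin (d + 1) → ℝ) s := by
          unfold pt
          have := ((hasDerivAt_id s).smul_const (Pi.single 0 1 : Fin (d + 1) → ℝ)).const_add
            (consL d y)
          simpa using this
        exact h1.comp_hasDerivAt s h2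
      · intro s
        have := hper (Fin.cons 1 0) (pt d s y)
        rw [← this]
        congr 1
        rw [pt_eq, pt_eq]
        funext i
        refine Fin.cases ?_ (fun i => ?_) i <;> simp
    let S : (Fin d → ℝ) → ℝ := fun y => (∑ j, (fderiv ℝ F y (Pi.single j 1)) ^ 2) / F y
    have cSF : Continuous S :=
      (continuous_finsetSum _ fun α _ => (cFd.clm_apply continuous_const).pow 2).div cF
        fun x => (hFpos x).ne'
    have point : ∀ y, (∫ s in (0:ℝ)..1, f (pt d s y) * Real.log (f (pt d s y)))
        - F y * Real.log (F y) + c * S y ≤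
        c * ∫ s in (0:ℝ)..1,
          (∑ α, (fderiv ℝ f (pt d s y) (Pi.single α 1)) ^ 2) / f (pt d s y) := by
      intro y
      have e : ∫ s in (0:ℝ)..1,
          (∑ α, (fderiv ℝ f (pt d s y) (Pi.single α 1)) ^ 2) / f (pt d s y) =
          (∫ s in (0:ℝ)..1, (fderiv ℝ f (pt d s y) (Pi.single 0 1)) ^ 2 / f (pt d s y)) +
          ∑ j : Fin d, ∫ s in (0:ℝ)..1,
            (fderiv ℝ f (pt d s y) (Pi.single j.succ 1)) ^ 2 / f (pt d s y) := by
        simp only [Finset.sum_div]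
        rw [intervalIntegral.integral_finsetSum, Fin.sum_univ_succ]
        exact fun α _ => ((cQ _).comp (cs y)).intervalIntegrable _ _
      have hS : S y ≤ ∑ j : Fin d, ∫ s in (0:ℝ)..1,
            (fderiv ℝ f (pt d s y) (Pi.single j.succ 1)) ^ 2 / f (pt d s y) := by
        simp only [S, Finset.sum_div]
        exact Finset.sum_le_sum fun j _ => CS y j
      rw [e, mul_add]
      have := mul_le_mul_of_nonneg_left hS hcpos.le
      linarith [one y]
    have j1 : IntegrableOn (fun y => ∫ s in (0:ℝ)..1, f (pt d s y) * Real.log (f (pt d s y)))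
        (Icc (0 : Fin d → ℝ) 1) := (slice_cont d _ cfl).integrableOn_Icc
    have j2 : IntegrableOn (fun y => F y * Real.log (F y)) (Icc (0 : Fin d → ℝ) 1) :=
      (Real.continuous_mul_log.comp cF).integrableOn_Icc
    have j3 : IntegrableOn (fun y => c * S y) (Icc (0 : Fin d → ℝ) 1) :=
      (cSF.const_mul c).integrableOn_Icc
    have j4 : IntegrableOn (fun y => c * ∫ s in (0:ℝ)..1,
          (∑ α, (fderiv ℝ f (pt d s y) (Pi.single α 1)) ^ 2) / f (pt d s y))
        (Icc (0 : Fin d → ℝ) 1) := ((slice_cont d _ cS).const_mul c).integrableOn_Icc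
    have j12 : IntegrableOn (fun y => (∫ s in (0:ℝ)..1, f (pt d s y) * Real.log (f (pt d s y)))
        - F y * Real.log (F y)) (Icc (0 : Fin d → ℝ) 1) := j1.sub j2
    have tot := integral_mono (μ := volume.restrict (Icc (0 : Fin d → ℝ) 1))
      (j12.add j3) j4 point
    have e1 : ∫ y in Icc (0 : Fin d → ℝ) 1,
        ((∫ s in (0:ℝ)..1, f (pt d s y) * Real.log (f (pt d s y))) - F y * Real.log (F y)
          + c * S y) =
        (∫ y in Icc (0 : Fin d → ℝ) 1, ∫ s in (0:ℝ)..1, f (pt d s y) * Real.log (f (pt d s y)))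
        - (∫ y in Icc (0 : Fin d → ℝ) 1, F y * Real.log (F y))
        + c * ∫ y in Icc (0 : Fin d → ℝ) 1, S y := by
      rw [integral_add j12 j3, integral_sub j1 j2, integral_const_mul]
    have tot2 := e1.symm.le.trans tot
    rw [integral_const_mul] at tot2
    rw [fubini_cube d _ cfl, fubini_cube d _ cf, fubini_cube d _ cS]
    change _ - (∫ y in Icc (0 : Fin d → ℝ) 1, F y) *
      Real.log (∫ y in Icc (0 : Fin d → ℝ) 1, F y) ≤ _
    change _ ≤ c * ∫ y in Icc (0 : Fin d → ℝ) 1, S y at IH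
    linarith


/-- logarithmic Sobolev inequality for the uniform measure on the torus
`T^d = ℝ^d/ℤ^d`, with constant `1/(8π²)`.  Functions on the torus are modeled as
`ℤ^d`-periodic functions on `ℝ^d`, and the uniform probability measure is Lebesgue
measure on `[0,1]^d`. -/
theorem uniform_logSobolev (d : ℕ)
    (f : (Fin d → ℝ) → ℝ)
    (hf_smooth : ContDiff ℝ (⊤ : ℕ∞) f)
    (hf_per : ∀ (k : Fin d → ℤ) (x : Fin d → ℝ), f (x + fun i => (k i : ℝ)) = f x)
    (hf_pos : ∀ x, 0 < f x) :
    (∫ x in Set.Icc (0 : Fin d → ℝ) 1, f x * Real.log (f x)) -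
        (∫ x in Set.Icc (0 : Fin d → ℝ) 1, f x) *
          Real.log (∫ x in Set.Icc (0 : Fin d → ℝ) 1, f x) ≤
      (1 / (8 * π ^ 2)) *
        ∫ x in Set.Icc (0 : Fin d → ℝ) 1,
          (∑ α, (fderiv ℝ f x (Pi.single α 1)) ^ 2) / f x := by
  exact lsi_pi d f (hf_smooth.of_le (by exact_mod_cast le_top)) hf_per hf_pos

end
end

section
/- Let μ be a probability measure on T^d and let φ ∈ L^∞(T^d × T^d) satisfy the cancellations ∫_{T^d} φ(x, z) μ(dx) = 0 and ∫_{T^d} φ(z, x) μ(dx) = 0 for every z ∈ T^d, and assume γ := (1600² + 36e⁴) ( sup_{p ≥ 1} (1/p) ‖ sup_z |φ(·, z)| ‖_{L^p(μ)} )² < 1. Then for every N ∈ ℕ: ∫_{T^{dN}} exp( (1/N) Σ_{i=1}^N Σ_{j=1}^N φ(x_i, x_j) ) μ^{⊗N}(dX) ≤ 2/(1−γ) < ∞. -/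
open MeasureTheory Real Set

noncomputable section

/-- The `d`-dimensional torus `T^d = ℝ^d/ℤ^d`. -/
abbrev Torus (d : ℕ) := Fin d → AddCircle (1 : ℝ)

/-- The function `x ↦ sup_z |φ(x,z)|`. -/
def supSecond {d : ℕ} (φ : Torus d → Torus d → ℝ) (x : Torus d) : ℝ :=
  ⨆ z : Torus d, |φ x z|

/-- The constant `γ = (1600² + 36e⁴) (sup_{p≥1} (1/p) ‖sup_z |φ(·,z)|‖_{L^p(μ)})²`. -/
def gammaConst {d : ℕ} (μ : Measure (Torus d)) (φ : Torus d → Torus d → ℝ) : ℝ :=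
  (1600 ^ 2 + 36 * Real.exp 4) *
    (⨆ p ∈ Set.Ici (1 : ℝ), (1 / p) * (∫ x, supSecond φ x ^ p ∂μ) ^ (1 / p)) ^ 2

theorem jw_integrable_bdd {α : Type*} [MeasurableSpace α] {ν : Measure α} [IsFiniteMeasure ν]
    {g : α → ℝ} (hg : Measurable g) (C : ℝ) (h : ∀ x, |g x| ≤ C) : Integrable g ν :=
  Integrable.of_bound hg.aestronglyMeasurable C (Filter.Eventually.of_forall fun x => by
    simpa using h x)

/-- Exponential of a bounded measurable function is integrable. -/
theorem jw_integrable_exp {α : Type*} [MeasurableSpace α] {ν : Measure α} [IsFiniteMeasure ν]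
    {g : α → ℝ} (hg : Measurable g) (C : ℝ) (h : ∀ x, |g x| ≤ C) :
    Integrable (fun x => Real.exp (g x)) ν :=
  jw_integrable_bdd hg.exp (Real.exp C) fun x => by
    rw [abs_of_pos (Real.exp_pos _)]
    exact Real.exp_le_exp.2 ((le_abs_self _).trans (h x))

theorem jw_abs_sum_le {ι : Type*} [Fintype ι] (a : ι → ℝ) (C : ℝ) (h : ∀ i, |a i| ≤ C) :
    |∑ i, a i| ≤ Fintype.card ι * C := by
  refine (Finset.abs_sum_le_sum_abs _ _).trans ?_
  refine (Finset.sum_le_sum fun i _ => h i).trans ?_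
  simp

theorem jw_exp_le (x : ℝ) : Real.exp x ≤ 1 + x + x ^ 2 * Real.exp |x| := by
  have h := Complex.norm_exp_sub_sum_le_norm_mul_exp (x : ℂ) 2
  have e : Complex.exp (x : ℂ) - ∑ m ∈ Finset.range 2, (x : ℂ) ^ m / (m.factorial : ℂ)
      = ((Real.exp x - (1 + x) : ℝ) : ℂ) := by
    simp [Finset.sum_range_succ]
  rw [e, Complex.norm_real, Complex.norm_real, Real.norm_eq_abs, Real.norm_eq_abs, sq_abs] at h
  have := (abs_le.1 h).2
  linarith

/-- Gaussian square-exponential moment. -/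
theorem jw_gauss : ∫ t, Real.exp (t ^ 2 / 8) ∂(ProbabilityTheory.gaussianReal 0 1) ≤ 2 := by
  rw [ProbabilityTheory.integral_gaussianReal_eq_integral_smul one_ne_zero]
  have : ∀ x : ℝ, ProbabilityTheory.gaussianPDFReal 0 1 x • Real.exp (x ^ 2 / 8)
      = (√(2 * Real.pi))⁻¹ * Real.exp (-(3/8) * x ^ 2) := by
    intro x
    simp only [ProbabilityTheory.gaussianPDFReal, smul_eq_mul, NNReal.coe_one, mul_one, sub_zero]
    rw [mul_assoc, ← Real.exp_add]
    congr 2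
    ring
  simp_rw [this]
  rw [integral_const_mul, integral_gaussian]
  have hp := Real.pi_pos
  rw [inv_mul_le_iff₀ (by positivity)]
  rw [Real.sqrt_le_left (by positivity), mul_pow, Real.sq_sqrt (by positivity)]
  field_simp
  norm_num

theorem jw_integrable_gauss :
    Integrable (fun t : ℝ => Real.exp (t ^ 2 / 8)) (ProbabilityTheory.gaussianReal 0 1) := by
  rw [ProbabilityTheory.gaussianReal_of_var_ne_zero 0 one_ne_zero]
  unfold ProbabilityTheory.gaussianPDF
  rw [integrable_withDensity_iff_integrable_smul' (by fun_prop) (by simp)]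
  have : ∀ x : ℝ, (ENNReal.ofReal (ProbabilityTheory.gaussianPDFReal 0 1 x)).toReal
      • Real.exp (x ^ 2 / 8)
      = (√(2 * Real.pi))⁻¹ * Real.exp (-(3/8) * x ^ 2) := by
    intro x
    rw [ENNReal.toReal_ofReal (ProbabilityTheory.gaussianPDFReal_nonneg _ _ _)]
    simp only [ProbabilityTheory.gaussianPDFReal, smul_eq_mul, NNReal.coe_one, mul_one, sub_zero]
    rw [mul_assoc, ← Real.exp_add]
    congr 2
    ring
  simp_rw [this]
  exact (integrable_exp_neg_mul_sq (by norm_num)).const_mul _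

/-- The Hoeffding lemma for a centred variable bounded by one. -/
theorem jw_hoeffding {Ω : Type*} [MeasurableSpace Ω] (μ : Measure Ω) [IsProbabilityMeasure μ]
    (g : Ω → ℝ) (hg : Measurable g) (hb : ∀ x, |g x| ≤ 1) (h0 : ∫ x, g x ∂μ = 0) (t : ℝ) :
    ∫ x, Real.exp (t * g x) ∂μ ≤ Real.exp (t ^ 2 / 2) := by
  have h := (ProbabilityTheory.hasSubgaussianMGF_of_mem_Icc_of_integral_eq_zero (μ := μ)
    (a := -1) (b := 1) hg.aemeasurable
    (Filter.Eventually.of_forall fun x => abs_le.1 (hb x)) h0).mgf_le t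
  have e : (((‖(1:ℝ) - (-1)‖₊ / 2) ^ 2 : NNReal) : ℝ) = 1 := by
    simp
    norm_num
  rw [e, one_mul] at h
  exact h

/-- Square-exponential moment of a sum of independent centred bounded variables. -/
theorem jw_square {Ω : Type*} [MeasurableSpace Ω] (μ : Measure Ω) [IsProbabilityMeasure μ]
    {κ : Type*} [Fintype κ] (n : ℕ) (hn : 0 < n) (hκ : Fintype.card κ ≤ n)
    (g : Ω → ℝ) (hg : Measurable g) (hb : ∀ x, |g x| ≤ 1) (h0 : ∫ x, g x ∂μ = 0) :
    ∫ z : κ → Ω, Real.exp ((∑ j, g (z j)) ^ 2 / (8 * n)) ∂(Measure.pi fun _ => μ) ≤ 2 := by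
  have hn' : (0 : ℝ) < n := by exact_mod_cast hn
  set τ : ℝ := 1 / (2 * √n) with hτ
  have hτ2 : τ ^ 2 = 1 / (4 * n) := by
    rw [hτ, div_pow, mul_pow, Real.sq_sqrt hn'.le]; norm_num
  have hτ0 : 0 ≤ τ := by positivity
  have e1 : ∀ v : ℝ, Real.exp (v ^ 2 / (8 * n))
      = ∫ G, Real.exp ((τ * v) * G) ∂(ProbabilityTheory.gaussianReal 0 1) := by
    intro v
    have := congrFun (ProbabilityTheory.mgf_fun_id_gaussianReal (μ := 0) (v := 1)) (τ * v)
    rw [ProbabilityTheory.mgf] at this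
    rw [this]
    congr 1
    rw [mul_pow, hτ2]
    simp only [NNReal.coe_one]
    field_simp
    ring
  simp_rw [e1]
  have hS : ∀ z : κ → Ω, |∑ j, g (z j)| ≤ Fintype.card κ := fun z => by
    simpa using jw_abs_sum_le (fun j => g (z j)) 1 fun j => hb _
  have hprodi : Integrable (Function.uncurry fun (z : κ → Ω) (G : ℝ) =>
      Real.exp ((τ * ∑ j, g (z j)) * G))
      ((Measure.pi fun _ : κ => μ).prod (ProbabilityTheory.gaussianReal 0 1)) := by
    set c : ℝ := τ * Fintype.card κ with hc
    have hi : Integrable (fun G : ℝ => Real.exp (c * G) + Real.exp ((-c) * G))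
        (ProbabilityTheory.gaussianReal 0 1) :=
      (ProbabilityTheory.integrable_exp_mul_gaussianReal c).add
        (ProbabilityTheory.integrable_exp_mul_gaussianReal (-c))
    refine (hi.comp_snd (Measure.pi fun _ : κ => μ)).mono' ?_ ?_
    · apply Measurable.aestronglyMeasurable
      unfold Function.uncurry
      fun_prop
    · refine Filter.Eventually.of_forall fun p => ?_
      obtain ⟨z, G⟩ := p
      simp only [Function.uncurry, Real.norm_eq_abs, abs_of_pos (Real.exp_pos _)]
      have hle : |τ * ∑ j, g (z j)| ≤ c := by
        rw [abs_mul, abs_of_nonneg hτ0]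
        exact mul_le_mul_of_nonneg_left (hS z) hτ0
      have h1 : (τ * ∑ j, g (z j)) * G ≤ c * |G| := by
        refine (le_abs_self _).trans ?_
        rw [abs_mul]
        exact mul_le_mul_of_nonneg_right hle (abs_nonneg _)
      rcases le_total 0 G with hG | hG
      · rw [abs_of_nonneg hG] at h1
        have := Real.exp_le_exp.2 h1
        have := Real.exp_pos (-c * G)
        linarith
      · rw [abs_of_nonpos hG] at h1
        have := Real.exp_le_exp.2 h1
        have := Real.exp_pos (c * G)
        rw [neg_mul]
        rw [mul_neg] at *
        linarith
  rw [integral_integral_swap hprodi]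
  refine le_trans (integral_mono hprodi.integral_prod_right jw_integrable_gauss fun G => ?_) jw_gauss
  have e2 : ∀ z : κ → Ω, Real.exp ((τ * ∑ j, g (z j)) * G)
      = ∏ j, Real.exp ((τ * G) * g (z j)) := by
    intro z
    rw [← Real.exp_sum, ← Finset.mul_sum]
    congr 1
    ring
  simp only [e2]
  rw [integral_fintype_prod_eq_prod (fun (_ : κ) (x : Ω) => Real.exp ((τ * G) * g x))]
  rw [Finset.prod_const, Finset.card_univ]
  calc (∫ x, Real.exp ((τ * G) * g x) ∂μ) ^ Fintype.card κ
      ≤ (Real.exp ((τ * G) ^ 2 / 2)) ^ Fintype.card κ :=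
        pow_le_pow_left₀ (integral_nonneg fun _ => (Real.exp_pos _).le)
          (jw_hoeffding μ g hg hb h0 _) _
    _ ≤ (Real.exp ((τ * G) ^ 2 / 2)) ^ n :=
        pow_le_pow_right₀ (Real.one_le_exp (by positivity)) hκ
    _ = Real.exp (G ^ 2 / 8) := by
        rw [← Real.exp_nat_mul, mul_pow, hτ2]
        congr 1
        field_simp
        ring

/-- Exponential moment of a centred variable. -/
theorem jw_centered {Ω : Type*} [MeasurableSpace Ω] (μ : Measure Ω) [IsProbabilityMeasure μ]
    (f h : Ω → ℝ) (hf : Measurable f) (hh : Measurable h) (C : ℝ) (hfC : ∀ x, |f x| ≤ C)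
    (hb : ∀ x, |h x| ≤ 8 * f x) (h0 : ∫ x, h x ∂μ = 0) :
    ∫ x, Real.exp (h x) ∂μ ≤ Real.exp (∫ x, h x ^ 2 * Real.exp (8 * f x) ∂μ) := by
  have hb' : ∀ x, |h x| ≤ 8 * C := fun x =>
    (hb x).trans (by linarith [le_abs_self (f x), hfC x])
  have i1 : Integrable h μ := jw_integrable_bdd hh _ hb'
  have i2 : Integrable (fun x => h x ^ 2 * Real.exp (8 * f x)) μ := by
    refine jw_integrable_bdd (by fun_prop) ((8 * C) ^ 2 * Real.exp (8 * C)) fun x => ?_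
    rw [abs_mul, abs_of_pos (Real.exp_pos _), abs_pow]
    have := le_abs_self (f x)
    have := hfC x
    gcongr
    · exact hb' x
    · linarith
  have i3 : Integrable (fun x => 1 + h x) μ := (integrable_const 1).add i1
  calc ∫ x, Real.exp (h x) ∂μ ≤ ∫ x, (1 + h x + h x ^ 2 * Real.exp (8 * f x)) ∂μ := by
        refine integral_mono (jw_integrable_exp hh _ hb') (((integrable_const 1).add i1).add i2) ?_
        intro x
        refine (jw_exp_le (h x)).trans ?_
        have := Real.exp_le_exp.2 (hb x)
        have := mul_le_mul_of_nonneg_left this (sq_nonneg (h x))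
        simp only
        linarith
    _ = (∫ x, h x ^ 2 * Real.exp (8 * f x) ∂μ) + 1 := by
        rw [integral_add i3 i2, integral_add (integrable_const 1) i1, h0]
        simp
        ring
    _ ≤ _ := Real.add_one_le_exp _

theorem jw_meas {Ω : Type*} [MeasurableSpace Ω] {φ : Ω → Ω → ℝ}
    (hφ : Measurable (Function.uncurry φ)) {α : Type*} [MeasurableSpace α] {a b : α → Ω}
    (ha : Measurable a) (hb : Measurable b) : Measurable fun p => φ (a p) (b p) :=
  hφ.comp (ha.prodMk hb)

/-- The decoupled (bipartite) bound. -/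
theorem jw_bipartite {Ω : Type*} [MeasurableSpace Ω] (μ : Measure Ω) [IsProbabilityMeasure μ]
    {ι κ : Type*} [Fintype ι] [Fintype κ] (n : ℕ) (hn : 0 < n) (hι : Fintype.card ι ≤ n)
    (hκ : Fintype.card κ ≤ n)
    (φ : Ω → Ω → ℝ) (f : Ω → ℝ) (hφ : Measurable (Function.uncurry φ)) (hf : Measurable f)
    (C : ℝ) (hfC : ∀ x, |f x| ≤ C) (hφf : ∀ x z, |φ x z| ≤ f x)
    (hc1 : ∀ z, ∫ x, φ x z ∂μ = 0) (hc2 : ∀ z, ∫ x, φ z x ∂μ = 0)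
    (hZ : ∫ x, Real.exp (100 * f x) ∂μ ≤ 2) :
    ∫ z : κ → Ω, ∫ y : ι → Ω, Real.exp (8 / (n : ℝ) * ∑ i, ∑ j, φ (y i) (z j))
      ∂(Measure.pi fun _ => μ) ∂(Measure.pi fun _ => μ) ≤ 2 := by
  have hn' : (0 : ℝ) < n := by exact_mod_cast hn
  have hC : ∀ x z, |φ x z| ≤ C := fun x z =>
    (hφf x z).trans ((le_abs_self _).trans (hfC x))
  have hf0 : ∀ x, 0 ≤ f x := fun x => (abs_nonneg _).trans (hφf x x)
  have hexpi : Integrable (fun x => Real.exp (100 * f x)) μ :=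
    jw_integrable_exp (by fun_prop) (100 * C) fun x => by
      rw [abs_mul, abs_of_nonneg (by norm_num : (0:ℝ) ≤ 100)]
      linarith [hfC x]
  set Z : ℝ := ∫ x, Real.exp (100 * f x) ∂μ with hZdef
  have hZ0 : 0 < Z := integral_exp_pos hexpi
  set ν : Measure Ω := μ.tilted (fun x => 100 * f x) with hν
  have : IsProbabilityMeasure ν := isProbabilityMeasure_tilted hexpi
  set g : Ω → Ω → ℝ := fun x z => φ x z * (46 * Real.exp (-(46 * f x))) with hg
  have hgm : Measurable (Function.uncurry g) := by
    have : Measurable fun p : Ω × Ω => φ p.1 p.2 := hφ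
    have : Measurable fun p : Ω × Ω => φ p.1 p.2 * (46 * Real.exp (-(46 * f p.1))) := by
      fun_prop
    exact this
  have hg1 : ∀ x z, |g x z| ≤ 1 := by
    intro x z
    simp only [hg]
    rw [abs_mul, abs_of_pos (by positivity : 0 < 46 * Real.exp (-(46 * f x))), Real.exp_neg]
    have h1 := Real.add_one_le_exp (46 * f x)
    have h2 := hφf x z
    have h3 := Real.exp_pos (46 * f x)
    rw [← mul_assoc, ← div_eq_mul_inv, div_le_one h3]
    linarith
  have hgc : ∀ x, ∫ z, g x z ∂μ = 0 := by
    intro x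
    simp only [hg]
    rw [integral_mul_const, hc2, zero_mul]
  set S : Ω → (κ → Ω) → ℝ := fun x z => ∑ j, g x (z j) with hS
  have hSm : Measurable (Function.uncurry S) := by
    have : Measurable fun p : Ω × (κ → Ω) => ∑ j, g p.1 (p.2 j) :=
      Finset.measurable_sum _ fun j _ => jw_meas hgm (by fun_prop) (by fun_prop)
    exact this
  have hSb : ∀ x z, |S x z| ≤ n := fun x z => by
    refine (jw_abs_sum_le (fun j => g x (z j)) 1 fun j => hg1 _ _).trans ?_
    rw [mul_one]
    exact_mod_cast hκ
  have hQb : ∀ x z, |S x z ^ 2 / (8 * n)| ≤ (n : ℝ) ^ 2 / (8 * n) := fun x z => by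
    rw [abs_div, abs_pow, abs_of_pos (by positivity : (0:ℝ) < 8 * n)]
    gcongr
    exact hSb x z
  have hprodi : Integrable (Function.uncurry fun (z : κ → Ω) (x : Ω) =>
      Real.exp (S x z ^ 2 / (8 * n))) ((Measure.pi fun _ : κ => μ).prod ν) := by
    refine jw_integrable_exp (g := fun p : (κ → Ω) × Ω => S p.2 p.1 ^ 2 / (8 * n)) ?_ _
      fun p => hQb p.2 p.1
    have : Measurable fun p : (κ → Ω) × Ω => S p.2 p.1 := hSm.comp measurable_swap
    fun_prop
  have key : ∀ z : κ → Ω, ∫ y : ι → Ω, Real.exp (8 / (n : ℝ) * ∑ i, ∑ j, φ (y i) (z j))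
      ∂(Measure.pi fun _ => μ) ≤ ∫ x, Real.exp (S x z ^ 2 / (8 * n)) ∂ν := by
    intro z
    set h : Ω → ℝ := fun x => 8 / (n : ℝ) * ∑ j, φ x (z j) with hh
    have hhm : Measurable h := by
      have : Measurable fun x => ∑ j, φ x (z j) :=
        Finset.measurable_sum _ fun j _ => jw_meas hφ (by fun_prop) (by fun_prop)
      fun_prop
    have hhb : ∀ x, |h x| ≤ 8 * f x := by
      intro x
      simp only [hh]
      rw [abs_mul, abs_of_pos (by positivity)]
      have h1 := jw_abs_sum_le (fun j => φ x (z j)) (f x) fun j => hφf _ _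
      have h2 : (Fintype.card κ : ℝ) * f x ≤ n * f x :=
        mul_le_mul_of_nonneg_right (by exact_mod_cast hκ) (hf0 x)
      calc 8 / (n : ℝ) * |∑ j, φ x (z j)| ≤ 8 / (n : ℝ) * (n * f x) := by
            gcongr
            exact h1.trans h2
        _ = 8 * f x := by field_simp
    have hh0 : ∫ x, h x ∂μ = 0 := by
      simp only [hh]
      rw [integral_const_mul, integral_finsetSum]
      · simp [hc1]
      · intro j _
        exact jw_integrable_bdd (jw_meas hφ (by fun_prop) (by fun_prop)) C fun x => hC _ _
    have e1 : ∀ y : ι → Ω, Real.exp (8 / (n : ℝ) * ∑ i, ∑ j, φ (y i) (z j))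
        = ∏ i, Real.exp (h (y i)) := by
      intro y
      rw [← Real.exp_sum, Finset.mul_sum]
    simp_rw [e1]
    rw [integral_fintype_prod_eq_prod (fun (_ : ι) (x : Ω) => Real.exp (h x))]
    rw [Finset.prod_const, Finset.card_univ]
    have hSz : Measurable fun x => S x z := hSm.comp (measurable_id.prodMk measurable_const)
    have hq0 : 0 ≤ ∫ x, S x z ^ 2 ∂ν := integral_nonneg fun x => sq_nonneg _
    have e2 : ∫ x, h x ^ 2 * Real.exp (8 * f x) ∂μ
        = 64 / (2116 * n ^ 2) * Z * ∫ x, S x z ^ 2 ∂ν := by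
      rw [hν, integral_tilted, ← integral_const_mul]
      refine integral_congr_ae (Filter.Eventually.of_forall fun x => ?_)
      simp only [smul_eq_mul]
      rw [← hZdef]
      have e3 : S x z = (∑ j, φ x (z j)) * (46 * Real.exp (-(46 * f x))) := by
        simp only [hS, hg, Finset.sum_mul]
      have e4 : Real.exp (100 * f x) * Real.exp (-(46 * f x)) ^ 2 = Real.exp (8 * f x) := by
        rw [← Real.exp_nat_mul, ← Real.exp_add]
        congr 1
        push_cast
        ring
      rw [e3, ← e4]
      simp only [hh]
      field_simp
      ring
    calc (∫ x, Real.exp (h x) ∂μ) ^ Fintype.card ι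
        ≤ (Real.exp (∫ x, h x ^ 2 * Real.exp (8 * f x) ∂μ)) ^ Fintype.card ι :=
          pow_le_pow_left₀ (integral_nonneg fun _ => (Real.exp_pos _).le)
            (jw_centered μ f h hf hhm C hfC hhb hh0) _
      _ ≤ (Real.exp (∫ x, h x ^ 2 * Real.exp (8 * f x) ∂μ)) ^ n :=
          pow_le_pow_right₀ (Real.one_le_exp (integral_nonneg fun x => by positivity)) hι
      _ ≤ Real.exp (∫ x, S x z ^ 2 / (8 * n) ∂ν) := by
          rw [← Real.exp_nat_mul, e2, integral_div]
          refine Real.exp_le_exp.2 ?_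
          have e5 : (n : ℝ) * (64 / (2116 * n ^ 2) * Z * ∫ x, S x z ^ 2 ∂ν)
              = (64 * Z / 2116) * ((∫ x, S x z ^ 2 ∂ν) / n) := by
            field_simp
          have e6 : (∫ x, S x z ^ 2 ∂ν) / (8 * n) = (1 / 8) * ((∫ x, S x z ^ 2 ∂ν) / n) := by
            field_simp
          rw [e5, e6]
          refine mul_le_mul_of_nonneg_right ?_ (by positivity)
          linarith
      _ ≤ ∫ x, Real.exp (S x z ^ 2 / (8 * n)) ∂ν := by
          refine ConvexOn.map_integral_le (g := Real.exp) convexOn_exp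
            Real.continuous_exp.continuousOn isClosed_univ
            (Filter.Eventually.of_forall fun _ => mem_univ _) ?_ ?_
          · exact jw_integrable_bdd (by fun_prop) _ fun x => hQb x z
          · exact jw_integrable_exp (by fun_prop) _ fun x => hQb x z
  have hprodi0 : Integrable (Function.uncurry fun (z : κ → Ω) (y : ι → Ω) =>
      Real.exp (8 / (n : ℝ) * ∑ i, ∑ j, φ (y i) (z j)))
      ((Measure.pi fun _ : κ => μ).prod (Measure.pi fun _ : ι => μ)) := by
    refine jw_integrable_exp (g := fun p : (κ → Ω) × (ι → Ω) =>
      8 / (n : ℝ) * ∑ i, ∑ j, φ (p.2 i) (p.1 j)) ?_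
      (8 / n * (Fintype.card ι * (Fintype.card κ * C))) fun p => ?_
    · refine measurable_const.mul (Finset.measurable_sum _ fun i _ =>
        Finset.measurable_sum _ fun j _ => jw_meas hφ (by fun_prop) (by fun_prop))
    · rw [abs_mul, abs_of_pos (by positivity)]
      gcongr
      exact jw_abs_sum_le _ _ fun i => jw_abs_sum_le _ _ fun j => hC _ _
  refine (integral_mono hprodi0.integral_prod_left hprodi.integral_prod_left key).trans ?_
  refine (integral_integral_swap hprodi).le.trans ?_
  calc ∫ x, ∫ z : κ → Ω, Real.exp (S x z ^ 2 / (8 * n)) ∂(Measure.pi fun _ => μ) ∂ν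
      ≤ ∫ _x, (2 : ℝ) ∂ν := by
        refine integral_mono hprodi.integral_prod_right (integrable_const _) fun x => ?_
        exact jw_square μ n hn hκ (g x) (hgm.comp (measurable_const.prodMk measurable_id))
          (hg1 x) (hgc x)
    _ = 2 := by simp

/-- Counting boolean vectors with prescribed values at two distinct places. -/
theorem jw_count {ι : Type*} [Fintype ι] [DecidableEq ι] (i j : ι) (hij : i ≠ j) :
    ∑ δ : ι → Bool, (if δ i = true ∧ δ j = false then (1 : ℝ) else 0)
      = 2 ^ Fintype.card ι / 4 := by
  have toggle : ∀ k : ι, ∀ F : (ι → Bool) → ℝ,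
      ∑ δ : ι → Bool, F (Function.update δ k (!δ k)) = ∑ δ, F δ := by
    intro k F
    have hinv : Function.Involutive fun δ : ι → Bool => Function.update δ k (!δ k) := by
      intro δ
      simp
    exact Equiv.sum_comp hinv.toPerm F
  set A : Bool → Bool → ℝ := fun a b =>
    ∑ δ : ι → Bool, (if δ i = a ∧ δ j = b then (1 : ℝ) else 0) with hA
  have t1 : ∀ a b, A a b = A (!a) b := by
    intro a b
    simp only [hA]
    rw [← toggle i]
    refine Finset.sum_congr rfl fun δ _ => ?_
    rw [Function.update_self, Function.update_of_ne hij.symm]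
    congr 1
    cases a <;> cases δ i <;> simp
  have t2 : ∀ a b, A a b = A a (!b) := by
    intro a b
    simp only [hA]
    rw [← toggle j]
    refine Finset.sum_congr rfl fun δ _ => ?_
    rw [Function.update_self, Function.update_of_ne hij]
    congr 1
    cases b <;> cases δ j <;> simp
  have tot : A true true + A true false + A false true + A false false
      = 2 ^ Fintype.card ι := by
    simp only [hA, ← Finset.sum_add_distrib]
    rw [Finset.sum_congr rfl (g := fun _ => (1 : ℝ))]
    · simp
    · intro δ _
      cases δ i <;> cases δ j <;> simp
  have h1 := t2 true false
  have h2 := t1 true false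
  have h3 := t1 true true
  simp only [Bool.not_true, Bool.not_false] at h1 h2 h3
  change A true false = _
  linarith

/-- Random-partition bound on one partition. -/
theorem jw_partition {Ω : Type*} [MeasurableSpace Ω] (μ : Measure Ω) [IsProbabilityMeasure μ]
    (n : ℕ) (hn : 0 < n) (δ : Fin n → Bool)
    (φ : Ω → Ω → ℝ) (f : Ω → ℝ) (hφ : Measurable (Function.uncurry φ)) (hf : Measurable f)
    (C : ℝ) (hfC : ∀ x, |f x| ≤ C) (hφf : ∀ x z, |φ x z| ≤ f x)
    (hc1 : ∀ z, ∫ x, φ x z ∂μ = 0) (hc2 : ∀ z, ∫ x, φ z x ∂μ = 0)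
    (hZ : ∫ x, Real.exp (100 * f x) ∂μ ≤ 2) :
    ∫ X : Fin n → Ω, Real.exp (8 / (n : ℝ) * ∑ i, ∑ j,
      (if δ i = true ∧ δ j = false then (1 : ℝ) else 0) * φ (X i) (X j))
      ∂(Measure.pi fun _ => μ) ≤ 2 := by
  have hC : ∀ x z, |φ x z| ≤ C := fun x z =>
    (hφf x z).trans ((le_abs_self _).trans (hfC x))
  have hn' : (0 : ℝ) < n := by exact_mod_cast hn
  let p : Fin n → Prop := fun i => δ i = true
  let G : ({i // p i} → Ω) × ({i // ¬ p i} → Ω) → ℝ := fun q =>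
    Real.exp (8 / (n : ℝ) * ∑ i, ∑ j, φ (q.1 i) (q.2 j))
  have e : ∀ X : Fin n → Ω, Real.exp (8 / (n : ℝ) * ∑ i, ∑ j,
      (if δ i = true ∧ δ j = false then (1 : ℝ) else 0) * φ (X i) (X j))
      = G (MeasurableEquiv.piEquivPiSubtypeProd (fun _ : Fin n => Ω) p X) := by
    intro X
    have hq : G (MeasurableEquiv.piEquivPiSubtypeProd (fun _ : Fin n => Ω) p X)
      = Real.exp (8 / (n : ℝ) * ∑ i : {i // p i}, ∑ j : {i // ¬ p i}, φ (X i) (X j)) := rfl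
    rw [hq]
    congr 2
    have inner : ∀ i : Fin n, ∑ j : {i // ¬ p i}, φ (X i) (X j)
        = ∑ j, if δ j = false then φ (X i) (X j) else 0 := by
      intro i
      rw [← Finset.sum_filter]
      refine (Finset.sum_subtype _ (fun j => ?_) (fun j => φ (X i) (X j))).symm
      simp [p]
    have outer : ∀ H : Fin n → ℝ, ∑ i : {i // p i}, H i
        = ∑ i, if δ i = true then H i else 0 := by
      intro H
      rw [← Finset.sum_filter]
      refine (Finset.sum_subtype _ (fun j => ?_) H).symm
      simp [p]
    rw [outer (fun i => ∑ j : {i // ¬ p i}, φ (X i) (X j))]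
    refine Finset.sum_congr rfl fun i _ => ?_
    rw [inner]
    split_ifs with h
    · refine Finset.sum_congr rfl fun j _ => ?_
      by_cases hj : δ j = false <;> simp [h, hj]
    · simp [h]
  simp_rw [e]
  rw [(measurePreserving_piEquivPiSubtypeProd (fun _ : Fin n => μ) p).integral_comp
    (MeasurableEquiv.measurableEmbedding _) G]
  have hprodi : Integrable G ((Measure.pi fun _ : {i // p i} => μ).prod
      (Measure.pi fun _ : {i // ¬ p i} => μ)) := by
    refine jw_integrable_exp (g := fun q : ({i // p i} → Ω) × ({i // ¬ p i} → Ω) =>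
      8 / (n : ℝ) * ∑ i, ∑ j, φ (q.1 i) (q.2 j)) ?_
      (8 / n * (Fintype.card {i // p i} * (Fintype.card {i // ¬ p i} * C))) fun q => ?_
    · refine measurable_const.mul (Finset.measurable_sum _ fun i _ =>
        Finset.measurable_sum _ fun j _ => jw_meas hφ (by fun_prop) (by fun_prop))
    · rw [abs_mul, abs_of_pos (by positivity)]
      gcongr
      exact jw_abs_sum_le _ _ fun i => jw_abs_sum_le _ _ fun j => hC _ _
  rw [integral_prod_symm _ hprodi]
  refine jw_bipartite μ n hn ?_ ?_ φ f hφ hf C hfC hφf hc1 hc2 hZ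
  · exact (Fintype.card_subtype_le _).trans (by simp)
  · exact (Fintype.card_subtype_le _).trans (by simp)

/-- The abstract bound. -/
theorem jw_main {Ω : Type*} [MeasurableSpace Ω] (μ : Measure Ω) [IsProbabilityMeasure μ]
    (n : ℕ) (hn : 0 < n)
    (φ : Ω → Ω → ℝ) (f : Ω → ℝ) (hφ : Measurable (Function.uncurry φ)) (hf : Measurable f)
    (C : ℝ) (hfC : ∀ x, |f x| ≤ C) (hφf : ∀ x z, |φ x z| ≤ f x)
    (hc1 : ∀ z, ∫ x, φ x z ∂μ = 0) (hc2 : ∀ z, ∫ x, φ z x ∂μ = 0)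
    (hZ : ∫ x, Real.exp (100 * f x) ∂μ ≤ 2) :
    ∫ X : Fin n → Ω, Real.exp (1 / (n : ℝ) * ∑ i, ∑ j, φ (X i) (X j))
      ∂(Measure.pi fun _ => μ) ≤ 2 := by
  have hC : ∀ x z, |φ x z| ≤ C := fun x z =>
    (hφf x z).trans ((le_abs_self _).trans (hfC x))
  have hf0 : ∀ x, 0 ≤ f x := fun x => (abs_nonneg _).trans (hφf x x)
  have hn' : (0 : ℝ) < n := by exact_mod_cast hn
  have hφm : ∀ i j : Fin n, Measurable fun X : Fin n → Ω => φ (X i) (X j) := fun i j =>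
    jw_meas hφ (by fun_prop) (by fun_prop)
  let E : (Fin n → Bool) → (Fin n → Ω) → ℝ := fun δ X => 8 / (n : ℝ) * ∑ i, ∑ j,
      (if δ i = true ∧ δ j = false then (1 : ℝ) else 0) * φ (X i) (X j)
  have hEint : ∀ δ, Integrable (fun X => Real.exp (E δ X)) (Measure.pi fun _ : Fin n => μ) := by
    intro δ
    refine jw_integrable_exp ?_ (8 / n * (n * (n * C))) fun X => ?_
    · exact measurable_const.mul (Finset.measurable_sum _ fun i _ =>
        Finset.measurable_sum _ fun j _ => measurable_const.mul (hφm i j))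
    · simp only [E]
      rw [abs_mul, abs_of_pos (by positivity)]
      gcongr
      have := jw_abs_sum_le (fun i => ∑ j, (if δ i = true ∧ δ j = false then (1 : ℝ) else 0)
        * φ (X i) (X j)) (n * C) fun i => by
          have := jw_abs_sum_le (fun j => (if δ i = true ∧ δ j = false then (1 : ℝ) else 0)
            * φ (X i) (X j)) C fun j => by
              have h1 := hC (X i) (X j)
              have h2 := (abs_nonneg _).trans h1
              split_ifs <;> simpa
          simpa using this
      simpa using this
  have hfint : ∀ i : Fin n, Integrable (fun X : Fin n → Ω => Real.exp (100 * f (X i)))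
      (Measure.pi fun _ : Fin n => μ) := fun i =>
    jw_integrable_exp (by fun_prop) (100 * C) fun X => by
      rw [abs_mul, abs_of_nonneg (by norm_num : (0:ℝ) ≤ 100)]
      linarith [hfC (X i)]
  have hEle : ∀ δ, ∫ X, Real.exp (E δ X) ∂(Measure.pi fun _ : Fin n => μ) ≤ 2 := fun δ =>
    jw_partition μ n hn δ φ f hφ hf C hfC hφf hc1 hc2 hZ
  have hfle : ∀ i : Fin n, ∫ X : Fin n → Ω, Real.exp (100 * f (X i))
      ∂(Measure.pi fun _ : Fin n => μ) ≤ 2 := fun i => by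
    rw [integral_comp_eval (μ := fun _ : Fin n => μ) (i := i)
      (f := fun x => Real.exp (100 * f x)) (by fun_prop)]
    exact hZ
  have hcard : (∑ _δ : Fin n → Bool, ((2 : ℝ) ^ n)⁻¹) = 1 := by simp
  have hcardn : (∑ _i : Fin n, (n : ℝ)⁻¹) = 1 := by
    simp [hn'.ne']
  have pt : ∀ X : Fin n → Ω, Real.exp (1 / (n : ℝ) * ∑ i, ∑ j, φ (X i) (X j))
      ≤ (1 / 2) * (∑ δ, ((2 : ℝ) ^ n)⁻¹ * Real.exp (E δ X))
        + (1 / 2) * ∑ i, (n : ℝ)⁻¹ * Real.exp (100 * f (X i)) := by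
    intro X
    set a : ℝ := ∑ δ, ((2 : ℝ) ^ n)⁻¹ * E δ X with ha
    set b : ℝ := ∑ i, (n : ℝ)⁻¹ * (2 * φ (X i) (X i)) with hb
    have hab : 1 / (n : ℝ) * ∑ i, ∑ j, φ (X i) (X j) = (1 / 2) * a + (1 / 2) * b := by
      have ha' : a = 2 / (n : ℝ) * ∑ i, ∑ j, (if i = j then 0 else φ (X i) (X j)) := by
        simp only [ha, E]
        rw [← Finset.mul_sum, ← Finset.mul_sum, Finset.sum_comm]
        have : ∀ i : Fin n, ∑ δ : Fin n → Bool, ∑ j,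
            (if δ i = true ∧ δ j = false then (1 : ℝ) else 0) * φ (X i) (X j)
            = 2 ^ n / 4 * ∑ j, (if i = j then 0 else φ (X i) (X j)) := by
          intro i
          rw [Finset.sum_comm, Finset.mul_sum]
          refine Finset.sum_congr rfl fun j _ => ?_
          rw [← Finset.sum_mul]
          split_ifs with hij
          · subst hij
            rw [mul_zero]
            rw [Finset.sum_eq_zero, zero_mul]
            intro δ _
            cases δ i <;> simp
          · rw [jw_count i j hij, Fintype.card_fin]
        rw [Finset.sum_congr rfl fun i _ => this i, ← Finset.mul_sum]
        field_simp
        ring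
      have hb' : b = 2 / (n : ℝ) * ∑ i, φ (X i) (X i) := by
        rw [hb, Finset.mul_sum]
        refine Finset.sum_congr rfl fun i _ => ?_
        field_simp
      have hs : ∑ i, ∑ j, φ (X i) (X j)
          = ∑ i, ∑ j, (if i = j then 0 else φ (X i) (X j)) + ∑ i, φ (X i) (X i) := by
        rw [← Finset.sum_add_distrib]
        refine Finset.sum_congr rfl fun i _ => ?_
        have : φ (X i) (X i) = ∑ j, if i = j then φ (X i) (X j) else 0 := by simp
        rw [this, ← Finset.sum_add_distrib]
        refine Finset.sum_congr rfl fun j _ => ?_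
        split_ifs <;> simp
      rw [hs, ha', hb']
      ring
    rw [hab]
    have c1 : Real.exp ((1 / 2) * a + (1 / 2) * b)
        ≤ (1 / 2) * Real.exp a + (1 / 2) * Real.exp b := by
      have := convexOn_exp.2 (mem_univ a) (mem_univ b) (by norm_num : (0:ℝ) ≤ 1 / 2)
        (by norm_num : (0:ℝ) ≤ 1 / 2) (by norm_num)
      simpa only [smul_eq_mul] using this
    have c2 : Real.exp a ≤ ∑ δ, ((2 : ℝ) ^ n)⁻¹ * Real.exp (E δ X) := by
      have := convexOn_exp.map_sum_le (t := Finset.univ) (w := fun _ : Fin n → Bool =>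
        ((2 : ℝ) ^ n)⁻¹) (p := fun δ => E δ X) (fun _ _ => by positivity) hcard
        (fun _ _ => mem_univ _)
      simpa only [smul_eq_mul] using this
    have c3 : Real.exp b ≤ ∑ i, (n : ℝ)⁻¹ * Real.exp (100 * f (X i)) := by
      have := convexOn_exp.map_sum_le (t := Finset.univ) (w := fun _ : Fin n =>
        (n : ℝ)⁻¹) (p := fun i => 2 * φ (X i) (X i)) (fun _ _ => by positivity) hcardn
        (fun _ _ => mem_univ _)
      simp only [smul_eq_mul] at this
      refine this.trans (Finset.sum_le_sum fun i _ => ?_)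
      refine mul_le_mul_of_nonneg_left (Real.exp_le_exp.2 ?_) (by positivity)
      linarith [le_abs_self (φ (X i) (X i)), hφf (X i) (X i), hf0 (X i)]
    linarith
  have iA : Integrable (fun X => ∑ δ, ((2 : ℝ) ^ n)⁻¹ * Real.exp (E δ X))
      (Measure.pi fun _ : Fin n => μ) :=
    integrable_finsetSum _ fun δ _ => (hEint δ).const_mul _
  have iB : Integrable (fun X : Fin n → Ω => ∑ i, (n : ℝ)⁻¹ * Real.exp (100 * f (X i)))
      (Measure.pi fun _ : Fin n => μ) :=
    integrable_finsetSum _ fun i _ => (hfint i).const_mul _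
  have rA : ∫ X, ∑ δ, ((2 : ℝ) ^ n)⁻¹ * Real.exp (E δ X) ∂(Measure.pi fun _ : Fin n => μ)
      ≤ 2 := by
    rw [integral_finsetSum _ fun δ _ => (hEint δ).const_mul _]
    calc _ ≤ ∑ _δ : Fin n → Bool, ((2 : ℝ) ^ n)⁻¹ * 2 := by
          refine Finset.sum_le_sum fun δ _ => ?_
          rw [integral_const_mul]
          exact mul_le_mul_of_nonneg_left (hEle δ) (by positivity)
      _ = 2 := by rw [← Finset.sum_mul, hcard, one_mul]
  have rB : ∫ X : Fin n → Ω, ∑ i, (n : ℝ)⁻¹ * Real.exp (100 * f (X i))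
      ∂(Measure.pi fun _ : Fin n => μ) ≤ 2 := by
    rw [integral_finsetSum _ fun i _ => (hfint i).const_mul _]
    calc _ ≤ ∑ _i : Fin n, (n : ℝ)⁻¹ * 2 := by
          refine Finset.sum_le_sum fun δ _ => ?_
          rw [integral_const_mul]
          exact mul_le_mul_of_nonneg_left (hfle δ) (by positivity)
      _ = 2 := by rw [← Finset.sum_mul, hcardn, one_mul]
  have hle := integral_mono_of_nonneg (μ := Measure.pi fun _ : Fin n => μ)
    (Filter.Eventually.of_forall fun X => (Real.exp_pos
      (1 / (n : ℝ) * ∑ i, ∑ j, φ (X i) (X j))).le)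
    ((iA.const_mul (1 / 2)).add (iB.const_mul (1 / 2))) (Filter.Eventually.of_forall pt)
  refine hle.trans ?_
  simp only [Pi.add_apply]
  rw [integral_add (iA.const_mul _) (iB.const_mul _), integral_const_mul, integral_const_mul]
  linarith

/-- Exponential moment from moment growth. -/
theorem jw_expmoment {Ω : Type*} [MeasurableSpace Ω] (μ : Measure Ω) [IsProbabilityMeasure μ]
    (f : Ω → ℝ) (hf : Measurable f) (hf0 : ∀ x, 0 ≤ f x) (C : ℝ) (hfC : ∀ x, |f x| ≤ C)
    (A : ℝ) (hA0 : 0 ≤ A) (hA : A ≤ 1 / 1600)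
    (hm : ∀ k : ℕ, 1 ≤ k → ∫ x, f x ^ k ∂μ ≤ (k * A) ^ k) :
    ∫ x, Real.exp (100 * f x) ∂μ ≤ 2 := by
  let F : ℕ → Ω → ℝ := fun k x => (100 * f x) ^ k / k.factorial
  have hF0 : ∀ k x, 0 ≤ F k x := fun k x => by
    have := hf0 x
    positivity
  have hFi : ∀ k, Integrable (F k) μ := by
    intro k
    refine jw_integrable_bdd (by fun_prop) ((100 * C) ^ k / k.factorial) fun x => ?_
    rw [abs_of_nonneg (hF0 k x)]
    have := hf0 x
    have := le_abs_self (f x)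
    have := hfC x
    simp only [F]
    gcongr
    linarith
  have hFb : ∀ k, ∫ x, F k x ∂μ ≤ (1 / 2) ^ k := by
    intro k
    rcases Nat.eq_zero_or_pos k with rfl | hk
    · simp [F]
    have e : ∫ x, F k x ∂μ = 100 ^ k / k.factorial * ∫ x, f x ^ k ∂μ := by
      rw [← integral_const_mul]
      refine integral_congr_ae (Filter.Eventually.of_forall fun x => ?_)
      simp only [F]
      ring
    rw [e]
    have h1 := hm k hk
    have h2 := Real.pow_div_factorial_le_exp k (by positivity) k
    have h3 : Real.exp (k : ℝ) = Real.exp 1 ^ k := by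
      rw [← Real.exp_nat_mul, mul_one]
    calc 100 ^ k / (k.factorial : ℝ) * ∫ x, f x ^ k ∂μ
        ≤ 100 ^ k / (k.factorial : ℝ) * (k * A) ^ k := by gcongr
      _ = (100 * A) ^ k * ((k : ℝ) ^ k / k.factorial) := by
          rw [mul_pow, mul_pow]; ring
      _ ≤ (100 * A) ^ k * Real.exp 1 ^ k := by
          rw [← h3]
          gcongr
      _ = (100 * A * Real.exp 1) ^ k := by rw [← mul_pow]
      _ ≤ (1 / 2) ^ k := by
          refine pow_le_pow_left₀ (by positivity) ?_ k
          have := Real.exp_one_lt_d9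
          have := Real.exp_pos 1
          nlinarith
  have hs2 : Summable fun k : ℕ => ((1 : ℝ) / 2) ^ k := summable_geometric_two
  have hnorm : ∀ k, ∫ x, ‖F k x‖ ∂μ = ∫ x, F k x ∂μ := fun k => by
    refine integral_congr_ae (Filter.Eventually.of_forall fun x => ?_)
    simp only [Real.norm_eq_abs, abs_of_nonneg (hF0 k x)]
  have hsum : Summable fun k => ∫ x, ‖F k x‖ ∂μ := by
    refine Summable.of_nonneg_of_le (fun k => integral_nonneg fun x => norm_nonneg _)
      (fun k => ?_) hs2
    rw [hnorm]
    exact hFb k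
  have key := hasSum_integral_of_summable_integral_norm hFi hsum
  have e : ∀ x, ∑' k, F k x = Real.exp (100 * f x) := fun x => by
    rw [Real.exp_eq_exp_ℝ, NormedSpace.exp_eq_tsum_div]
  simp_rw [e] at key
  rw [← key.tsum_eq, ← tsum_geometric_two]
  exact key.summable.tsum_le_tsum hFb hs2

/-- Jabin–Wang large deviation bound, Theorem `borner_B`:
for a probability measure `μ` on `T^d` and a bounded measurable kernel `φ` with the
cancellations `∫ φ(x,z) μ(dx) = 0 = ∫ φ(z,x) μ(dx)` for all `z`, if `γ < 1` then
`∫ exp((1/N) Σ_{i,j} φ(x_i,x_j)) dμ^{⊗N} ≤ 2/(1−γ)`. -/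
theorem jabin_wang_exponential_bound_B (d : ℕ)
    (μ : Measure (Torus d)) [IsProbabilityMeasure μ]
    (φ : Torus d → Torus d → ℝ)
    (hφ_meas : Measurable (Function.uncurry φ))
    (hφ_bdd : ∃ C, ∀ x z : Torus d, |φ x z| ≤ C)
    (hsup_meas : Measurable (supSecond φ))
    (hcanc₁ : ∀ z : Torus d, ∫ x, φ x z ∂μ = 0)
    (hcanc₂ : ∀ z : Torus d, ∫ x, φ z x ∂μ = 0)
    (hγ : gammaConst μ φ < 1)
    (N : ℕ) :
    (∫ X : Fin N → Torus d,
        Real.exp ((1 / (N : ℝ)) * ∑ i : Fin N, ∑ j : Fin N, φ (X i) (X j))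
        ∂(Measure.pi fun _ : Fin N => μ))
      ≤ 2 / (1 - gammaConst μ φ) := by
  obtain ⟨C, hC⟩ := hφ_bdd
  have hbdd : ∀ x, BddAbove (range fun z => |φ x z|) := fun x =>
    ⟨C, by rintro _ ⟨z, rfl⟩; exact hC x z⟩
  have hφf : ∀ x z, |φ x z| ≤ supSecond φ x := fun x z => le_ciSup (hbdd x) z
  have hf0 : ∀ x, 0 ≤ supSecond φ x := fun x => (abs_nonneg _).trans (hφf x x)
  have hfC' : ∀ x, supSecond φ x ≤ C := fun x => ciSup_le fun z => hC x z
  have hfC : ∀ x, |supSecond φ x| ≤ C := fun x => by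
    rw [abs_of_nonneg (hf0 x)]
    exact hfC' x
  have hC0 : 0 ≤ C := (hf0 0).trans (hfC' 0)
  set A : ℝ := ⨆ p ∈ Set.Ici (1 : ℝ), (1 / p) * (∫ x, supSecond φ x ^ p ∂μ) ^ (1 / p) with hAdef
  have hγdef : gammaConst μ φ = (1600 ^ 2 + 36 * Real.exp 4) * A ^ 2 := rfl
  have hterm : ∀ p : ℝ, 1 ≤ p →
      (1 / p) * (∫ x, supSecond φ x ^ p ∂μ) ^ (1 / p) ≤ C := by
    intro p hp
    have hp0 : 0 < p := by linarith
    have h0 : 0 ≤ ∫ x, supSecond φ x ^ p ∂μ :=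
      integral_nonneg fun x => Real.rpow_nonneg (hf0 x) _
    have h1 : ∫ x, supSecond φ x ^ p ∂μ ≤ C ^ p := by
      have : ∫ x, supSecond φ x ^ p ∂μ ≤ ∫ _x, C ^ p ∂μ :=
        integral_mono_of_nonneg
          (Filter.Eventually.of_forall fun x => Real.rpow_nonneg (hf0 x) _)
          (integrable_const _)
          (Filter.Eventually.of_forall fun x => Real.rpow_le_rpow (hf0 x) (hfC' x) hp0.le)
      simpa using this
    have h2 : (∫ x, supSecond φ x ^ p ∂μ) ^ (1 / p) ≤ C := by
      refine (Real.rpow_le_rpow h0 h1 (by positivity)).trans ?_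
      rw [← Real.rpow_mul hC0, mul_one_div_cancel hp0.ne', Real.rpow_one]
    have h3 : 1 / p ≤ 1 := by
      rw [div_le_one hp0]
      exact hp
    have h4 := Real.rpow_nonneg h0 (1 / p)
    calc _ ≤ 1 * (∫ x, supSecond φ x ^ p ∂μ) ^ (1 / p) := by gcongr
      _ ≤ C := by rw [one_mul]; exact h2
  have hA : ∀ p : ℝ, 1 ≤ p →
      (1 / p) * (∫ x, supSecond φ x ^ p ∂μ) ^ (1 / p) ≤ A := by
    intro p hp
    have hb : BddAbove (range fun p : ℝ => ⨆ (_ : p ∈ Set.Ici (1 : ℝ)),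
        (1 / p) * (∫ x, supSecond φ x ^ p ∂μ) ^ (1 / p)) := by
      refine ⟨C, ?_⟩
      rintro _ ⟨q, rfl⟩
      exact Real.iSup_le (fun hq => hterm q hq) hC0
    have := le_ciSup hb p
    refine le_trans ?_ this
    have hp' : p ∈ Set.Ici (1 : ℝ) := hp
    simp only [ciSup_pos hp']
    exact le_rfl
  have hA0 : 0 ≤ A := by
    refine le_trans ?_ (hA 1 le_rfl)
    have h0 : 0 ≤ ∫ x, supSecond φ x ^ (1 : ℝ) ∂μ :=
      integral_nonneg fun x => Real.rpow_nonneg (hf0 x) _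
    positivity
  have hγ0 : 0 ≤ gammaConst μ φ := by
    rw [hγdef]
    positivity
  have hA1 : A ≤ 1 / 1600 := by
    by_contra hcon
    push Not at hcon
    have h1 : (1 / 1600 : ℝ) ^ 2 < A ^ 2 := by gcongr
    have h2 := Real.exp_pos 4
    have h3 : 0 ≤ 36 * Real.exp 4 * A ^ 2 := by positivity
    rw [hγdef] at hγ
    nlinarith
  have hm : ∀ k : ℕ, 1 ≤ k → ∫ x, supSecond φ x ^ k ∂μ ≤ (k * A) ^ k := by
    intro k hk
    have hk1 : (1 : ℝ) ≤ k := by exact_mod_cast hk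
    have hk0 : (0 : ℝ) < k := by linarith
    have h := hA k hk1
    simp only [Real.rpow_natCast] at h
    have h0 : 0 ≤ ∫ x, supSecond φ x ^ k ∂μ := integral_nonneg fun x => pow_nonneg (hf0 x) _
    have h1 : (∫ x, supSecond φ x ^ k ∂μ) ^ (1 / (k : ℝ)) ≤ k * A := by
      rw [one_div_mul_eq_div, div_le_iff₀ hk0] at h
      linarith
    have h2 := pow_le_pow_left₀ (Real.rpow_nonneg h0 _) h1 k
    rw [one_div, Real.rpow_inv_natCast_pow h0 (by omega)] at h2
    exact h2
  have hZ := jw_expmoment μ (supSecond φ) hsup_meas hf0 C hfC A hA0 hA1 hm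
  have h2 : (2 : ℝ) ≤ 2 / (1 - gammaConst μ φ) := by
    rw [le_div_iff₀ (by linarith)]
    linarith
  rcases Nat.eq_zero_or_pos N with rfl | hN
  · refine le_trans ?_ h2
    simp
  · exact (jw_main μ N hN φ (supSecond φ) hφ_meas hsup_meas C hfC hφf hcanc₁ hcanc₂ hZ).trans h2

end
end
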